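/- arXiv:1506.07560 — 7 statements merged into one kernel-verified Lean document; each statement's English description precedes it below -/
import Mathlib

section
/- If τ ≥ 1/3, then the capillary Whitham symbol m is strictly increasing on [0, ∞) and m(z) → ∞ as z → ∞; consequently m(Nk) > m(k) for every k > 0 and every integer N ≥ 2. -/
open Real Filter

/-- The capillary Whitham symbol `m(z) = √(gd(1 + τ z²) tanh z / z)`, `m(0) = √(gd)`,
with `τ = T/(g d²)`. -/
noncomputable def mW (g d T : ℝ) (z : ℝ) : ℝ :=
  if z = 0 then Real.sqrt (g * d)
  else Real.sqrt (g * d * (1 + T / (g * d ^ 2) * z ^ 2) * Real.tanh z / z)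

lemma aux_pos {f f' : ℝ → ℝ} (h0 : f 0 = 0) (hf : ∀ x, HasDerivAt f (f' x) x)
    (hp : ∀ x, 0 < x → 0 < f' x) : ∀ x, 0 < x → 0 < f x := by
  intro x hx
  have hm : StrictMonoOn f (Set.Ici 0) := by
    apply strictMonoOn_of_deriv_pos (convex_Ici 0)
    · exact fun y _ => (hf y).continuousAt.continuousWithinAt
    · intro y hy
      rw [interior_Ici] at hy
      rw [(hf y).deriv]
      exact hp y hy
  have := hm (Set.mem_Ici.2 le_rfl) (Set.mem_Ici.2 hx.le) hx
  rwa [h0] at this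

lemma aux_P (w : ℝ) (hw : 0 < w) : 0 < (w^2-12) * sinh w + (12*w + w^3) := by
  have id1 : ∀ x : ℝ, HasDerivAt (fun w : ℝ => w) 1 x := fun x => hasDerivAt_id x
  have p2 : ∀ x : ℝ, HasDerivAt (fun w : ℝ => w^2) (2*x) x := fun x => by
    simpa using hasDerivAt_pow 2 x
  have p3 : ∀ x : ℝ, HasDerivAt (fun w : ℝ => w^3) (3*x^2) x := fun x => by
    simpa using hasDerivAt_pow 3 x
  have h4 : ∀ x : ℝ, 0 < x → 0 < x^2 * sinh x + 8*x*cosh x := fun x hx => by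
    have := sinh_pos_iff.2 hx
    have := cosh_pos x
    positivity
  have h3 := aux_pos (f := fun w => (w^2-6)*cosh w + 6*w*sinh w + 6) (by norm_num)
    (fun x => by
      have := ((((p2 x).sub_const 6).mul (hasDerivAt_cosh x)).add
        (((id1 x).const_mul 6).mul (hasDerivAt_sinh x))).add_const 6
      refine this.congr_deriv ?_
      ring) h4
  have h2 := aux_pos (f := fun w => (w^2-10)*sinh w + 4*w*cosh w + 6*w) (by norm_num)
    (fun x => by
      have := ((((p2 x).sub_const 10).mul (hasDerivAt_sinh x)).add
        (((id1 x).const_mul 4).mul (hasDerivAt_cosh x))).add ((id1 x).const_mul 6)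
      refine this.congr_deriv ?_
      ring) h3
  have h1 := aux_pos (f := fun w => (w^2-12)*cosh w + 2*w*sinh w + (12 + 3*w^2)) (by norm_num)
    (fun x => by
      have := ((((p2 x).sub_const 12).mul (hasDerivAt_cosh x)).add
        (((id1 x).const_mul 2).mul (hasDerivAt_sinh x))).add (((p2 x).const_mul 3).const_add 12)
      refine this.congr_deriv ?_
      ring) h2
  exact aux_pos (f := fun w => (w^2-12)*sinh w + (12*w + w^3)) (by norm_num)
    (fun x => by
      have := (((p2 x).sub_const 12).mul (hasDerivAt_sinh x)).add
        (((id1 x).const_mul 12).add (p3 x))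
      refine this.congr_deriv ?_
      ring) h1 w hw

lemma aux_R (z : ℝ) (hz : 0 < z) : 0 < (3+z^2) * sinh z - 3*z*cosh z := by
  have id1 : ∀ x : ℝ, HasDerivAt (fun w : ℝ => w) 1 x := fun x => hasDerivAt_id x
  have p2 : ∀ x : ℝ, HasDerivAt (fun w : ℝ => w^2) (2*x) x := fun x => by
    simpa using hasDerivAt_pow 2 x
  have h1 := aux_pos (f := fun w => w*cosh w - sinh w) (f' := fun w => w * sinh w) (by norm_num)
    (fun x => by
      have := ((id1 x).mul (hasDerivAt_cosh x)).sub (hasDerivAt_sinh x)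
      refine this.congr_deriv ?_
      ring) (fun x hx => mul_pos hx (sinh_pos_iff.2 hx))
  exact aux_pos (f := fun w => (3+w^2)*sinh w - 3*w*cosh w)
    (f' := fun w => w * (w*cosh w - sinh w)) (by norm_num)
    (fun x => by
      have := (((p2 x).const_add 3).mul (hasDerivAt_sinh x)).sub
        (((id1 x).const_mul 3).mul (hasDerivAt_cosh x))
      refine this.congr_deriv ?_
      ring) (fun x hx => mul_pos hx (h1 x hx)) z hz

lemma aux_F (t : ℝ) (ht : 1/3 ≤ t) :
    StrictMonoOn (fun z : ℝ => (1 + t*z^2) * sinh z / (z * cosh z)) (Set.Ioi 0) := by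
  have id1 : ∀ x : ℝ, HasDerivAt (fun w : ℝ => w) 1 x := fun x => hasDerivAt_id x
  have p2 : ∀ x : ℝ, HasDerivAt (fun w : ℝ => w^2) (2*x) x := fun x => by
    simpa using hasDerivAt_pow 2 x
  have hd : ∀ x : ℝ, 0 < x → HasDerivAt (fun z : ℝ => (1 + t*z^2) * sinh z / (z * cosh z))
      (((t*x^2-1) * (sinh x * cosh x) + (1+t*x^2)*x) / (x * cosh x)^2) x := fun x hx => by
    have := ((((p2 x).const_mul t).const_add 1).mul (hasDerivAt_sinh x)).div
        ((id1 x).mul (hasDerivAt_cosh x)) (mul_pos hx (cosh_pos x)).ne'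
    refine this.congr_deriv ?_
    simp only [Pi.mul_apply]
    congr 1
    linear_combination ((1+t*x^2)*x) * cosh_sq x
  apply strictMonoOn_of_deriv_pos (convex_Ioi 0)
  · exact fun y hy => (hd y hy).continuousAt.continuousWithinAt
  · intro y hy
    rw [interior_Ioi] at hy
    have hy : 0 < y := hy
    rw [(hd y hy).deriv]
    have hc := cosh_pos y
    have hs := sinh_pos_iff.2 hy
    refine div_pos ?_ (by positivity)
    have h1 := aux_P (2*y) (by linarith)
    rw [sinh_two_mul] at h1
    have h2 : 0 ≤ (t-1/3) * (y^2*(sinh y*cosh y) + y^3) :=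
      mul_nonneg (by linarith) (by positivity)
    linear_combination h1/24 + h2

lemma mW_pos_eq (g d T z : ℝ) (hz : 0 < z) : mW g d T z =
    Real.sqrt (g * d * ((1 + T / (g * d ^ 2) * z ^ 2) * sinh z / (z * cosh z))) := by
  have hc := cosh_pos z
  rw [mW, if_neg hz.ne', tanh_eq_sinh_div_cosh]
  congr 1
  generalize T / (g * d^2) = t
  field_simp

/-- if `τ ≥ 1/3` then `m` is strictly increasing on `[0,∞)` and tends to `∞`;
consequently `m(Nk) > m(k)` for `k > 0` and integers `N ≥ 2`. -/
theorem whitham_symbol_strictMono_of_large_surface_tension (g d T : ℝ)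
    (hg : 0 < g) (hd : 0 < d) (hT : 0 ≤ T) (hτ : 1 / 3 ≤ T / (g * d ^ 2)) :
    StrictMonoOn (mW g d T) (Set.Ici 0) ∧
    Tendsto (mW g d T) atTop atTop ∧
    ∀ k : ℝ, 0 < k → ∀ N : ℕ, 2 ≤ N → mW g d T k < mW g d T (N * k) := by
  have hgd : 0 < g * d := mul_pos hg hd
  have hmono : StrictMonoOn (mW g d T) (Set.Ici 0) := by
    intro x hx y hy hxy
    have hx : 0 ≤ x := hx
    have hy0 : 0 < y := hx.trans_lt hxy
    rw [mW_pos_eq g d T y hy0]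
    have hcy := cosh_pos y
    rcases hx.eq_or_lt with h | h
    · subst h
      rw [mW, if_pos rfl]
      apply Real.sqrt_lt_sqrt hgd.le
      apply lt_mul_of_one_lt_right hgd
      rw [one_lt_div (by positivity)]
      have h1 := aux_R y hy0
      have hs := sinh_pos_iff.2 hy0
      have h2 : 0 ≤ (T / (g * d ^ 2) - 1/3) * (y^2 * sinh y) :=
        mul_nonneg (by linarith) (by positivity)
      linear_combination h1/3 + h2
    · rw [mW_pos_eq g d T x h]
      have hs := sinh_pos_iff.2 h
      have hcx := cosh_pos x
      apply Real.sqrt_lt_sqrt (by positivity)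
      exact mul_lt_mul_of_pos_left (aux_F _ hτ h hy0 hxy) hgd
  refine ⟨hmono, ?_, ?_⟩
  · have h1 : Tendsto (fun z : ℝ => Real.sqrt (g * d / 6 * z)) atTop atTop :=
      Real.tendsto_sqrt_atTop.comp (tendsto_id.const_mul_atTop (by positivity))
    refine tendsto_atTop_mono' atTop ?_ h1
    filter_upwards [eventually_ge_atTop 1] with z hz
    have hz0 : 0 < z := by linarith
    rw [mW_pos_eq g d T z hz0]
    apply Real.sqrt_le_sqrt
    have hc := cosh_pos z
    have hs := sinh_pos_iff.2 hz0
    have hsc : cosh z ≤ 2 * sinh z := by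
      rw [cosh_eq, sinh_eq]
      have e1 : exp z = exp (2*z) * exp (-z) := by rw [← exp_add]; ring_nf
      have e2 := add_one_le_exp (2*z)
      have e3 := exp_pos (-z)
      nlinarith
    have : z / 6 ≤ (1 + T / (g * d ^ 2) * z ^ 2) * sinh z / (z * cosh z) := by
      rw [le_div_iff₀ (by positivity)]
      have h2 : 0 ≤ (T / (g * d ^ 2) - 1/3) * (z^2 * sinh z) :=
        mul_nonneg (by linarith) (by positivity)
      have h3 : 0 ≤ z^2 * (2 * sinh z - cosh z) := mul_nonneg (by positivity) (by linarith)
      linear_combination h2 + h3/6 + hs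
    calc g * d / 6 * z = g * d * (z/6) := by ring
      _ ≤ _ := mul_le_mul_of_nonneg_left this hgd.le
  · intro k hk N hN
    have hN' : (2:ℝ) ≤ N := by exact_mod_cast hN
    refine hmono hk.le (Set.mem_Ici.2 (by positivity)) ?_
    nlinarith
end

section
/- If 0 < τ < 1/3, then the capillary Whitham symbol m has a unique critical point z* on (0, ∞): m is strictly decreasing on (0, z*] and strictly increasing on [z*, ∞), so z* is the unique local (and global) minimum of m on (0, ∞); moreover m(z) → ∞ as z → ∞. -/
open Real Filter

theorem whAux_pos (f f' : ℝ → ℝ) (hf : ∀ x, HasDerivAt f (f' x) x) (h0 : f 0 = 0)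
    (hp : ∀ x, 0 < x → 0 < f' x) (x : ℝ) (hx : 0 < x) : 0 < f x := by
  have hm : StrictMonoOn f (Set.Ici 0) := by
    apply strictMonoOn_of_deriv_pos (convex_Ici 0)
    · exact fun y _ => (hf y).continuousAt.continuousWithinAt
    · intro y hy
      rw [interior_Ici] at hy
      rw [(hf y).deriv]
      exact hp y hy
  have := hm (Set.self_mem_Ici) (Set.mem_Ici.2 hx.le) hx
  rwa [h0] at this

theorem whAux_G2 (x : ℝ) (hx : 0 < x) :
    0 < 4 * sinh x * cosh x + 2 * sinh x / cosh x ^ 3 - 6 * x := by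
  refine whAux_pos (fun x => 4 * sinh x * cosh x + 2 * sinh x / cosh x ^ 3 - 6 * x)
    (fun x => 2 * (cosh x ^ 2 - 1) ^ 2 * (4 * cosh x ^ 2 + 3) / cosh x ^ 4) ?_ (by simp) ?_ x hx
  · intro y
    have hc := cosh_pos y
    have h1 := ((((hasDerivAt_sinh y).const_mul 4).mul (hasDerivAt_cosh y)).add
      (((hasDerivAt_sinh y).const_mul 2).div ((hasDerivAt_cosh y).pow 3) (pow_pos hc 3).ne')).sub
      ((hasDerivAt_id y).const_mul 6)
    refine h1.congr_deriv ?_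
    have hs := sinh_sq y
    simp only [Pi.pow_apply]
    field_simp
    have e4 : sinh y ^ 2 = cosh y ^ 2 - 1 := hs
    push_cast
    ring_nf
    try simp only [e4]
    ring
  · intro y hy
    have hc := cosh_pos y
    have hs := sinh_pos_iff.2 hy
    have : cosh y ^ 2 - 1 = sinh y ^ 2 := by rw [sinh_sq]
    rw [this]
    positivity

theorem whAux_G1 (x : ℝ) (hx : 0 < x) :
    0 < 2 * sinh x ^ 2 + (sinh x / cosh x) ^ 2 - 3 * x ^ 2 := by
  refine whAux_pos (fun x => 2 * sinh x ^ 2 + (sinh x / cosh x) ^ 2 - 3 * x ^ 2)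
    (fun x => 4 * sinh x * cosh x + 2 * sinh x / cosh x ^ 3 - 6 * x) ?_ (by simp) whAux_G2 x hx
  intro y
  have hc := cosh_pos y
  have h1 := ((((hasDerivAt_sinh y).pow 2).const_mul 2).add
    (((hasDerivAt_sinh y).div (hasDerivAt_cosh y) hc.ne').pow 2)).sub
    (((hasDerivAt_id y).pow 2).const_mul 3)
  refine h1.congr_deriv ?_
  have e4 : sinh y ^ 2 = cosh y ^ 2 - 1 := sinh_sq y
  have : cosh y * cosh y - sinh y * sinh y = 1 := by nlinarith
  simp only [Pi.div_apply, this, id]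
  norm_num
  field_simp
  try ring

theorem whAux_G0 (x : ℝ) (hx : 0 < x) : x ^ 3 * cosh x < sinh x ^ 3 := by
  have key : 0 < sinh x ^ 3 / cosh x - x ^ 3 := by
    refine whAux_pos (fun x => sinh x ^ 3 / cosh x - x ^ 3)
      (fun x => 2 * sinh x ^ 2 + (sinh x / cosh x) ^ 2 - 3 * x ^ 2) ?_ (by simp) whAux_G1 x hx
    intro y
    have hc := cosh_pos y
    have h1 := (((hasDerivAt_sinh y).pow 3).div (hasDerivAt_cosh y) hc.ne').sub
      ((hasDerivAt_id y).pow 3)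
    refine h1.congr_deriv ?_
    have e4 : sinh y ^ 4 = sinh y ^ 2 * (cosh y ^ 2 - 1) := by rw [← sinh_sq y]; ring
    simp only [Pi.pow_apply, id]
    field_simp
    push_cast
    ring_nf
    try simp only [e4]
    ring
  have hc := cosh_pos x
  rwa [sub_pos, lt_div_iff₀ hc] at key

theorem whAux_wilker (x : ℝ) (hx : 0 < x) :
    0 < sinh x ^ 2 * cosh x + x * sinh x - 2 * x ^ 2 * cosh x := by
  have h := whAux_G0 x hx
  have hc := cosh_pos x
  have hs := sinh_pos_iff.2 hx
  have h2 : 0 < sinh x ^ 2 * (sinh x ^ 2 * cosh x + x * sinh x - 2 * x ^ 2 * cosh x) := by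
    have : sinh x ^ 2 * (sinh x ^ 2 * cosh x + x * sinh x - 2 * x ^ 2 * cosh x)
      = cosh x * (sinh x ^ 2 - x ^ 2) ^ 2 + x * (sinh x ^ 3 - x ^ 3 * cosh x) := by ring
    rw [this]
    have : 0 < x * (sinh x ^ 3 - x ^ 3 * cosh x) := mul_pos hx (sub_pos.2 h)
    positivity
  exact (pos_iff_pos_of_mul_pos h2).1 (by positivity)

theorem whAux_sc (x : ℝ) (hx : 0 < x) : x < sinh x * cosh x := by
  have h1 := self_lt_sinh_iff.2 hx
  have h2 := one_le_cosh x
  nlinarith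

theorem whAux_sc3 (x : ℝ) (hx : 0 < x) : 2 / 3 * x ^ 3 < sinh x * cosh x - x := by
  have key : 0 < sinh x * cosh x - x - 2 / 3 * x ^ 3 := by
    refine whAux_pos (fun x => sinh x * cosh x - x - 2 / 3 * x ^ 3)
      (fun x => 2 * (sinh x ^ 2 - x ^ 2)) ?_ (by simp) ?_ x hx
    · intro y
      have h1 := (((hasDerivAt_sinh y).mul (hasDerivAt_cosh y)).sub (hasDerivAt_id y)).sub
        (((hasDerivAt_id y).pow 3).const_mul (2 / 3))
      refine h1.congr_deriv ?_
      have e4 : cosh y ^ 2 = sinh y ^ 2 + 1 := cosh_sq y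
      simp only [id]
      push_cast
      ring_nf
      try simp only [e4]
      ring
    · intro y hy
      have := self_lt_sinh_iff.2 hy
      nlinarith
  linarith

theorem whAux_tanh (x : ℝ) (hx : 0 < x) : sinh x ≤ x * cosh x := by
  have key : 0 < x * cosh x - sinh x := by
    refine whAux_pos (fun x => x * cosh x - sinh x)
      (fun x => x * sinh x) ?_ (by simp) ?_ x hx
    · intro y
      have h1 := ((hasDerivAt_id y).mul (hasDerivAt_cosh y)).sub (hasDerivAt_sinh y)
      refine h1.congr_deriv ?_
      simp only [id]
      ring
    · intro y hy
      have := sinh_pos_iff.2 hy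
      positivity
  linarith

theorem whAux_phi : StrictMonoOn
    (fun z : ℝ => z ^ 2 * (sinh z * cosh z + z) / (sinh z * cosh z - z)) (Set.Ioi 0) := by
  have hD : ∀ z : ℝ, 0 < z → HasDerivAt
      (fun z : ℝ => z ^ 2 * (sinh z * cosh z + z) / (sinh z * cosh z - z))
      (2 * z * cosh z * (sinh z ^ 2 * cosh z + z * sinh z - 2 * z ^ 2 * cosh z)
        / (sinh z * cosh z - z) ^ 2) z := by
    intro z hz
    have h0 := sub_pos.2 (whAux_sc z hz)
    have hsc := (hasDerivAt_sinh z).mul (hasDerivAt_cosh z)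
    have h1 := (((hasDerivAt_id z).pow 2).mul (hsc.add (hasDerivAt_id z))).div
      (hsc.sub (hasDerivAt_id z)) h0.ne'
    refine h1.congr_deriv ?_
    simp only [Pi.mul_apply, Pi.add_apply, Pi.sub_apply, Pi.pow_apply, id]
    congr 1
    have e4 : sinh z ^ 2 = cosh z ^ 2 - 1 := sinh_sq z
    have e3 : sinh z ^ 3 = sinh z * (cosh z ^ 2 - 1) := by rw [← e4]; ring
    push_cast
    ring_nf
    try simp only [e4, e3]
    ring
  apply strictMonoOn_of_deriv_pos (convex_Ioi 0)
  · exact fun y hy => (hD y hy).continuousAt.continuousWithinAt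
  · intro y hy
    rw [interior_Ioi] at hy
    rw [(hD y hy).deriv]
    have h0 := sub_pos.2 (whAux_sc y hy)
    have h1 := whAux_wilker y hy
    have hc := cosh_pos y
    have hy' : 0 < y := hy
    positivity

theorem whAux_root (t : ℝ) (h0 : 0 < t) (h1 : t < 1 / 3) : ∃ w : ℝ, 0 < w ∧
    (∀ z, 0 < z → z < w → t * (z ^ 2 * (sinh z * cosh z + z)) - (sinh z * cosh z - z) < 0) ∧
    (t * (w ^ 2 * (sinh w * cosh w + w)) - (sinh w * cosh w - w) = 0) ∧
    (∀ z, w < z → 0 < t * (z ^ 2 * (sinh z * cosh z + z)) - (sinh z * cosh z - z)) := by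
  have hcont : Continuous
      (fun z : ℝ => t * (z ^ 2 * (sinh z * cosh z + z)) - (sinh z * cosh z - z)) := by
    have := continuous_sinh
    have := continuous_cosh
    fun_prop
  obtain ⟨a, ha, hLa⟩ : ∃ a : ℝ, 0 < a ∧
      t * (a ^ 2 * (sinh a * cosh a + a)) - (sinh a * cosh a - a) < 0 := by
    have hc : Continuous (fun z : ℝ => t * (cosh z ^ 2 + 1)) := by
      have := continuous_cosh
      fun_prop
    have hev : ∀ᶠ z in nhds (0 : ℝ), t * (cosh z ^ 2 + 1) < 2 / 3 := by
      apply hc.continuousAt.eventually_lt_const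
      simp
      linarith
    have hev2 : ∀ᶠ z in nhdsWithin (0 : ℝ) (Set.Ioi 0), t * (cosh z ^ 2 + 1) < 2 / 3 :=
      hev.filter_mono nhdsWithin_le_nhds
    obtain ⟨a, hA, ha⟩ := (hev2.and self_mem_nhdsWithin).exists
    have ha' : 0 < a := ha
    refine ⟨a, ha', ?_⟩
    have e1 := whAux_sc3 a ha'
    have e2 := whAux_tanh a ha'
    have e3 := cosh_pos a
    have e4 : sinh a * cosh a + a ≤ a * (cosh a ^ 2 + 1) := by nlinarith
    have e5 : t * (a ^ 2 * (sinh a * cosh a + a)) ≤ t * (a ^ 2 * (a * (cosh a ^ 2 + 1))) := by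
      gcongr
    have e6 : a ^ 3 * (t * (cosh a ^ 2 + 1)) < a ^ 3 * (2 / 3) := by gcongr
    nlinarith
  have hbig : ∀ b : ℝ, 0 < b → 1 ≤ t * b ^ 2 →
      0 < t * (b ^ 2 * (sinh b * cosh b + b)) - (sinh b * cosh b - b) := by
    intro b hb h
    have := sinh_pos_iff.2 hb
    have := cosh_pos b
    have e : 0 < sinh b * cosh b + b := by positivity
    nlinarith
  have hab : ∃ b, a ≤ b ∧ 0 < b ∧ 1 ≤ t * b ^ 2 := by
    refine ⟨a + 1 + 1 / t, ?_, by positivity, ?_⟩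
    · have : 0 < 1 / t := by positivity
      linarith
    · have e1 : 0 < 1 / t := by positivity
      have e2 : t * (1 / t) = 1 := by field_simp
      have : 1 / t ≤ (a + 1 + 1 / t) ^ 2 := by nlinarith
      calc 1 = t * (1 / t) := e2.symm
        _ ≤ _ := by gcongr
  obtain ⟨b, hab, hb, hb1⟩ := hab
  have hLb := hbig b hb hb1
  obtain ⟨w, ⟨hw1, hw2⟩, hw⟩ := intermediate_value_Icc hab hcont.continuousOn ⟨hLa.le, hLb.le⟩
  have hw0 : 0 < w := lt_of_lt_of_le ha hw1
  simp only at hw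
  have hDw := sub_pos.2 (whAux_sc w hw0)
  have hphi : w ^ 2 * (sinh w * cosh w + w) / (sinh w * cosh w - w) = 1 / t := by
    rw [div_eq_div_iff hDw.ne' h0.ne']
    linarith
  refine ⟨w, hw0, ?_, hw, ?_⟩
  · intro z hz hzw
    have h := whAux_phi hz hw0 hzw
    simp only at h
    have hDz := sub_pos.2 (whAux_sc z hz)
    rw [hphi, div_lt_div_iff₀ hDz h0] at h
    linarith
  · intro z hzw
    have hz := hw0.trans hzw
    have h := whAux_phi hw0 hz hzw
    simp only at h
    have hDz := sub_pos.2 (whAux_sc z hz)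
    rw [hphi, div_lt_div_iff₀ h0 hDz] at h
    linarith

theorem whAux_arg_pos (k t z : ℝ) (hk : 0 < k) (ht : 0 < t) (hz : 0 < z) :
    0 < k * (1 + t * z ^ 2) * Real.tanh z / z := by
  have h1 := sinh_pos_iff.2 hz
  have h2 := cosh_pos z
  rw [Real.tanh_eq_sinh_div_cosh]
  positivity

theorem whAux_deriv (g d T z : ℝ) (hg : 0 < g) (hd : 0 < d)
    (ht : 0 < T / (g * d ^ 2)) (hz : 0 < z) :
    ∃ c : ℝ, 0 < c ∧ HasDerivAt (mW g d T)
      (c * (T / (g * d ^ 2) * (z ^ 2 * (sinh z * cosh z + z)) - (sinh z * cosh z - z))) z := by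
  have hk : 0 < g * d := by positivity
  have hc := cosh_pos z
  have hP := whAux_arg_pos (g * d) (T / (g * d ^ 2)) z hk ht hz
  set t := T / (g * d ^ 2) with htdef
  set k := g * d with hkdef
  have hE : mW g d T =ᶠ[nhds z]
      fun z => Real.sqrt (k * (1 + t * z ^ 2) * (sinh z / cosh z) / z) := by
    filter_upwards [lt_mem_nhds hz] with y hy
    simp only [mW, if_neg (ne_of_gt hy), Real.tanh_eq_sinh_div_cosh, hkdef, htdef]
  rw [Real.tanh_eq_sinh_div_cosh] at hP
  have hd1 : HasDerivAt (fun z => k * (1 + t * z ^ 2) * (sinh z / cosh z) / z)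
      (k * (t * (z ^ 2 * (sinh z * cosh z + z)) - (sinh z * cosh z - z))
        / (z ^ 2 * cosh z ^ 2)) z := by
    have h1 := ((((((hasDerivAt_id z).pow 2).const_mul t).const_add 1).const_mul k).mul
      ((hasDerivAt_sinh z).div (hasDerivAt_cosh z) hc.ne')).div (hasDerivAt_id z) hz.ne'
    refine h1.congr_deriv ?_
    have : cosh z * cosh z - sinh z * sinh z = 1 := by nlinarith [sinh_sq z]
    simp only [Pi.mul_apply, Pi.div_apply, Pi.pow_apply, this, id]
    field_simp
    push_cast
    ring
  have h2 := (hd1.sqrt hP.ne').congr_of_eventuallyEq hE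
  refine ⟨k / (z ^ 2 * cosh z ^ 2) / (2 * Real.sqrt (k * (1 + t * z ^ 2) * (sinh z / cosh z) / z)),
    ?_, h2.congr_deriv ?_⟩
  · have := Real.sqrt_pos.2 hP
    positivity
  · ring

theorem whAux_tendsto (g d T : ℝ) (hg : 0 < g) (hd : 0 < d)
    (ht : 0 < T / (g * d ^ 2)) : Tendsto (mW g d T) atTop atTop := by
  have hk : 0 < g * d := by positivity
  have h1 : Tendsto (fun z : ℝ => Real.sqrt (g * d * (T / (g * d ^ 2)) / 2 * z)) atTop atTop :=
    Real.tendsto_sqrt_atTop.comp (tendsto_id.const_mul_atTop (by positivity))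
  refine tendsto_atTop_mono' _ ?_ h1
  filter_upwards [eventually_ge_atTop 1] with z hz
  have hz0 : 0 < z := by linarith
  simp only [mW, if_neg (ne_of_gt hz0)]
  apply Real.sqrt_le_sqrt
  have hc := cosh_pos z
  have hs := self_lt_sinh_iff.2 hz0
  have htanh : 1 / 2 ≤ Real.tanh z := by
    rw [Real.tanh_eq_sinh_div_cosh, div_le_div_iff₀ (by norm_num) hc]
    nlinarith [cosh_sq z]
  rw [le_div_iff₀ hz0]
  generalize T / (g * d ^ 2) = t at *
  generalize g * d = k at *
  have : k * (1 + t * z ^ 2) * (1 / 2) ≤ k * (1 + t * z ^ 2) * Real.tanh z := by gcongr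
  nlinarith

/-- if `0 < τ < 1/3` then `m` has a unique critical point `z*` on `(0,∞)`;
`m` is strictly decreasing on `(0, z*]`, strictly increasing on `[z*, ∞)`, so `z*` is the
unique (strict global) minimum of `m` on `(0,∞)`; moreover `m(z) → ∞` as `z → ∞`. -/
theorem whitham_symbol_unique_minimum_of_small_surface_tension (g d T : ℝ)
    (hg : 0 < g) (hd : 0 < d)
    (hτ0 : 0 < T / (g * d ^ 2)) (hτ1 : T / (g * d ^ 2) < 1 / 3) :
    ∃ zstar : ℝ, 0 < zstar ∧
      (∀ z : ℝ, 0 < z → (deriv (mW g d T) z = 0 ↔ z = zstar)) ∧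
      StrictAntiOn (mW g d T) (Set.Ioc 0 zstar) ∧
      StrictMonoOn (mW g d T) (Set.Ici zstar) ∧
      (∀ z : ℝ, 0 < z → z ≠ zstar → mW g d T zstar < mW g d T z) ∧
      Tendsto (mW g d T) atTop atTop := by
  obtain ⟨w, hw, hlt, heq, hgt⟩ := whAux_root _ hτ0 hτ1
  have hcont : ∀ z, 0 < z → ContinuousAt (mW g d T) z := fun z hz => by
    obtain ⟨c, hc, h⟩ := whAux_deriv g d T z hg hd hτ0 hz
    exact h.continuousAt
  have hneg : ∀ z, 0 < z → z < w → deriv (mW g d T) z < 0 := fun z hz hzw => by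
    obtain ⟨c, hc, h⟩ := whAux_deriv g d T z hg hd hτ0 hz
    rw [h.deriv]
    exact mul_neg_of_pos_of_neg hc (hlt z hz hzw)
  have hpos : ∀ z, w < z → 0 < deriv (mW g d T) z := fun z hzw => by
    obtain ⟨c, hc, h⟩ := whAux_deriv g d T z hg hd hτ0 (hw.trans hzw)
    rw [h.deriv]
    exact mul_pos hc (hgt z hzw)
  have hzero : deriv (mW g d T) w = 0 := by
    obtain ⟨c, hc, h⟩ := whAux_deriv g d T w hg hd hτ0 hw
    rw [h.deriv, heq, mul_zero]
  have hanti : StrictAntiOn (mW g d T) (Set.Ioc 0 w) := by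
    apply strictAntiOn_of_deriv_neg (convex_Ioc 0 w)
    · exact fun y hy => (hcont y hy.1).continuousWithinAt
    · intro y hy
      rw [interior_Ioc] at hy
      exact hneg y hy.1 hy.2
  have hmono : StrictMonoOn (mW g d T) (Set.Ici w) := by
    apply strictMonoOn_of_deriv_pos (convex_Ici w)
    · exact fun y hy => (hcont y (lt_of_lt_of_le hw hy)).continuousWithinAt
    · intro y hy
      rw [interior_Ici] at hy
      exact hpos y hy
  refine ⟨w, hw, ?_, hanti, hmono, ?_, whAux_tendsto g d T hg hd hτ0⟩
  · intro z hz
    constructor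
    · intro h
      rcases lt_trichotomy z w with h1 | h1 | h1
      · exact absurd h (hneg z hz h1).ne
      · exact h1
      · exact absurd h (hpos z h1).ne'
    · rintro rfl
      exact hzero
  · intro z hz hne
    rcases lt_or_gt_of_ne hne with h1 | h1
    · exact hanti ⟨hz, h1.le⟩ ⟨hw, le_rfl⟩ h1
    · exact hmono Set.self_mem_Ici (Set.mem_Ici.2 h1.le) h1
end

section
/- If 0 < τ < 1/3, then for each integer N ≥ 2 there exists a unique k_N > 0 such that m(k_N) = m(N·k_N); moreover the sequence (k_N) is strictly decreasing in N and k_N → 0 as N → ∞. -/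
open Real Filter

lemma pos_of_deriv_pos (q q' : ℝ → ℝ) (h0 : q 0 = 0) (hq : ∀ x, HasDerivAt q (q' x) x)
    (hp : ∀ x, 0 < x → 0 < q' x) (x : ℝ) (hx : 0 < x) : 0 < q x := by
  have hm : StrictMonoOn q (Set.Ici 0) := by
    apply strictMonoOn_of_deriv_pos (convex_Ici 0)
    · exact fun y _ => (hq y).continuousAt.continuousWithinAt
    · intro y hy
      rw [interior_Ici] at hy
      rw [(hq y).deriv]; exact hp y hy
  have := hm (Set.mem_Ici.2 le_rfl) (Set.mem_Ici.2 hx.le) hx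
  rwa [h0] at this

lemma cosh_low (x : ℝ) (hx : 0 < x) : 1 + x ^ 2 / 2 < cosh x := by
  have := pos_of_deriv_pos (fun x => cosh x - (1 + x ^ 2 / 2)) (fun x => sinh x - x) (by simp)
    (fun x => by
      have h := (hasDerivAt_cosh x).sub ((((hasDerivAt_id x).pow 2).div_const 2).const_add 1)
      refine h.congr_deriv ?_
      simp) (fun x hx => by have := self_lt_sinh_iff.2 hx; linarith) x hx
  linarith

lemma sinh_low (x : ℝ) (hx : 0 < x) : x + x ^ 3 / 6 < sinh x := by
  have := pos_of_deriv_pos (fun x => sinh x - (x + x ^ 3 / 6)) (fun x => cosh x - (1 + x ^ 2 / 2))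
    (by simp)
    (fun x => by
      have h := (hasDerivAt_sinh x).sub ((hasDerivAt_id x).add (((hasDerivAt_id x).pow 3).div_const 6))
      refine h.congr_deriv ?_
      simp; ring) (fun x hx => by have := cosh_low x hx; linarith) x hx
  linarith

lemma sinh_up (x : ℝ) (hx : 0 < x) : sinh x < x * cosh x := by
  have := pos_of_deriv_pos (fun x => x * cosh x - sinh x) (fun x => x * sinh x)
    (by simp)
    (fun x => by
      have h := ((hasDerivAt_id x).mul (hasDerivAt_cosh x)).sub (hasDerivAt_sinh x)
      refine h.congr_deriv ?_
      simp) (fun x hx => mul_pos hx (sinh_pos_iff.2 hx)) x hx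
  linarith

lemma tanh_low (x : ℝ) (hx : 0 < x) : cosh x * (x - x ^ 3 / 3) < sinh x := by
  have := pos_of_deriv_pos (fun x => sinh x - cosh x * (x - x ^ 3 / 3))
    (fun x => x * (x * cosh x - sinh x) + sinh x * x ^ 3 / 3)
    (by simp)
    (fun x => by
      have h := (hasDerivAt_sinh x).sub ((hasDerivAt_cosh x).mul
        ((hasDerivAt_id x).sub (((hasDerivAt_id x).pow 3).div_const 3)))
      refine h.congr_deriv ?_
      simp; ring) (fun x hx => by
        have h1 := sinh_up x hx
        have h2 := sinh_pos_iff.2 hx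
        have h3 : 0 < x * (x * cosh x - sinh x) := mul_pos hx (by linarith)
        positivity) x hx
  linarith

lemma key_ineq (z : ℝ) (hz : 0 < z) :
    2 * z ^ 2 * cosh z < sinh z ^ 2 * cosh z + sinh z * z := by
  have h1 := sinh_low z hz
  have h2 := tanh_low z hz
  have hc := cosh_pos z
  have h3 : z ^ 2 + z ^ 4 / 3 ≤ sinh z ^ 2 := by
    have : (z + z ^ 3 / 6) ^ 2 ≤ sinh z ^ 2 := by gcongr
    nlinarith [sq_nonneg (z ^ 3)]
  have h4 := mul_le_mul_of_nonneg_right h3 hc.le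
  have h5 := mul_lt_mul_of_pos_right h2 hz
  nlinarith

noncomputable def GW (z : ℝ) : ℝ :=
  (sinh z * cosh z - z) / (z ^ 2 * (sinh z * cosh z + z))

noncomputable def FW (τ z : ℝ) : ℝ :=
  ((1 + τ * z ^ 2) * sinh z) / (z * cosh z)

lemma GW_deriv (z : ℝ) (hz : 0 < z) : HasDerivAt GW
    (-(2 * z * cosh z * (sinh z ^ 2 * cosh z + sinh z * z - 2 * z ^ 2 * cosh z)) /
      (z ^ 2 * (sinh z * cosh z + z)) ^ 2) z := by
  have hs := sinh_pos_iff.2 hz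
  have hc := cosh_pos z
  have hsc := (hasDerivAt_sinh z).mul (hasDerivAt_cosh z)
  have h := (hsc.sub (hasDerivAt_id z)).div
    (((hasDerivAt_id z).pow 2).mul (hsc.add (hasDerivAt_id z)))
    (by simp; constructor <;> positivity)
  refine h.congr_deriv ?_
  simp only [Pi.mul_apply, Pi.add_apply, Pi.sub_apply, Pi.pow_apply, id]
  congr 1
  have e := cosh_sq z
  have e3 : cosh z ^ 3 = cosh z * (sinh z ^ 2 + 1) := by rw [← e]; ring
  push_cast
  ring_nf
  simp only [e3, e]
  ring

lemma FW_deriv (τ z : ℝ) (hz : 0 < z) : HasDerivAt (FW τ)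
    ((τ - GW z) * (z ^ 2 * (sinh z * cosh z + z) / (z * cosh z) ^ 2)) z := by
  have hs := sinh_pos_iff.2 hz
  have hc := cosh_pos z
  have h := ((((((hasDerivAt_id z).pow 2).const_mul τ).const_add 1).mul (hasDerivAt_sinh z))).div
    ((hasDerivAt_id z).mul (hasDerivAt_cosh z)) (by simp; constructor <;> positivity)
  refine h.congr_deriv ?_
  have e := cosh_sq z
  have e1 : (τ - GW z) * (z ^ 2 * (sinh z * cosh z + z) / (z * cosh z) ^ 2)
      = (τ * (z ^ 2 * (sinh z * cosh z + z)) - (sinh z * cosh z - z)) / (z * cosh z) ^ 2 := by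
    unfold GW
    have : sinh z * cosh z + z ≠ 0 := by positivity
    field_simp
  rw [e1]
  simp only [Pi.mul_apply, Pi.add_apply, Pi.sub_apply, Pi.pow_apply, id]
  congr 1
  push_cast
  ring_nf
  simp only [e]
  ring

lemma GW_anti : StrictAntiOn GW (Set.Ioi 0) := by
  apply strictAntiOn_of_deriv_neg (convex_Ioi 0)
  · exact fun y hy => (GW_deriv y hy).continuousAt.continuousWithinAt
  · intro y hy
    rw [interior_Ioi] at hy
    have hy' : 0 < y := hy
    rw [(GW_deriv y hy).deriv]
    have hs := sinh_pos_iff.2 hy'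
    have hc := cosh_pos y
    have := key_ineq y hy
    apply div_neg_of_neg_of_pos
    · have : 0 < 2 * y * cosh y * (sinh y ^ 2 * cosh y + sinh y * y - 2 * y ^ 2 * cosh y) :=
        mul_pos (by positivity) (by linarith)
      linarith
    · positivity

lemma exists_z0 (τ : ℝ) (h0 : 0 < τ) (h1 : τ < 1 / 3) : ∃ z, 0 < z ∧ GW z = τ := by
  -- small point
  have hsm : ∃ a, 0 < a ∧ τ < GW a := by
    have hcont : Tendsto (fun z : ℝ => τ * (cosh z ^ 2 + 1)) (nhdsWithin 0 (Set.Ioi 0))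
        (nhds (τ * (cosh 0 ^ 2 + 1))) := by
      have : Continuous (fun z : ℝ => τ * (cosh z ^ 2 + 1)) := by fun_prop
      exact (this.tendsto 0).mono_left nhdsWithin_le_nhds
    have hev := hcont.eventually_lt_const (u := 2 / 3) (by simp; linarith)
    obtain ⟨a, ha, hap⟩ := (hev.and self_mem_nhdsWithin).exists
    have hap : 0 < a := hap
    refine ⟨a, hap, ?_⟩
    have hs := sinh_pos_iff.2 hap
    have hc := cosh_pos a
    unfold GW
    rw [lt_div_iff₀ (by positivity)]
    have hl := sinh_low (2 * a) (by linarith)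
    rw [sinh_two_mul] at hl
    have hu := mul_lt_mul_of_pos_right (sinh_up a hap) hc
    have h2 : τ * (sinh a * cosh a + a) ≤ a * (2 / 3) := by
      calc τ * (sinh a * cosh a + a) ≤ τ * (a * cosh a * cosh a + a) := by gcongr
        _ = a * (τ * (cosh a ^ 2 + 1)) := by ring
        _ ≤ _ := by gcongr
    have h3 := mul_le_mul_of_nonneg_left h2 (sq_nonneg a)
    nlinarith
  obtain ⟨a, ha, hGa⟩ := hsm
  have hlg : ∃ b, 0 < b ∧ GW b < τ := by
    refine ⟨1 / √τ, by positivity, ?_⟩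
    have hb : 0 < 1 / √τ := by positivity
    have e : τ * (1 / √τ) ^ 2 = 1 := by
      rw [div_pow, sq_sqrt h0.le]; field_simp
    generalize 1 / √τ = b at *
    have hs := sinh_pos_iff.2 hb
    have hc := cosh_pos b
    unfold GW
    rw [div_lt_iff₀ (by positivity), ← mul_assoc, e]
    linarith
  obtain ⟨b, hb, hGb⟩ := hlg
  have := isPreconnected_Ioi.intermediate_value (s := Set.Ioi (0 : ℝ)) (f := GW) (a := b) (b := a) hb ha
    (fun y hy => (GW_deriv y hy).continuousAt.continuousWithinAt)
  obtain ⟨z, hz, hzz⟩ := this ⟨hGb.le, hGa.le⟩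
  exact ⟨z, hz, hzz⟩

lemma FW_cont (τ : ℝ) : ContinuousOn (FW τ) (Set.Ioi 0) :=
  fun y hy => (FW_deriv τ y hy).continuousAt.continuousWithinAt

lemma FW_unimodal (τ : ℝ) (h0 : 0 < τ) (h1 : τ < 1 / 3) : ∃ z, 0 < z ∧
    StrictAntiOn (FW τ) (Set.Ioc 0 z) ∧ StrictMonoOn (FW τ) (Set.Ici z) := by
  obtain ⟨z, hz, hG⟩ := exists_z0 τ h0 h1
  refine ⟨z, hz, ?_, ?_⟩
  · apply strictAntiOn_of_deriv_neg (convex_Ioc 0 z) ((FW_cont τ).mono fun y hy => hy.1)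
    intro y hy
    rw [interior_Ioc] at hy
    have hy0 : 0 < y := hy.1
    rw [(FW_deriv τ y hy0).deriv]
    have hs := sinh_pos_iff.2 hy0
    have hc := cosh_pos y
    have := GW_anti hy0 hz hy.2
    exact mul_neg_of_neg_of_pos (by linarith) (by positivity)
  · apply strictMonoOn_of_deriv_pos (convex_Ici z)
      ((FW_cont τ).mono fun y hy => lt_of_lt_of_le hz hy)
    intro y hy
    rw [interior_Ici] at hy
    have hy0 : 0 < y := lt_trans hz hy
    rw [(FW_deriv τ y hy0).deriv]
    have hs := sinh_pos_iff.2 hy0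
    have hc := cosh_pos y
    have := GW_anti hz hy0 hy
    exact mul_pos (by linarith) (by positivity)

lemma FW_up (τ z : ℝ) (h0 : 0 < τ) (hz : 0 < z) : FW τ z ≤ 1 + τ * z ^ 2 := by
  have hc := cosh_pos z
  unfold FW
  rw [div_le_iff₀ (by positivity)]
  have := (sinh_up z hz).le
  gcongr

lemma FW_low (τ z : ℝ) (h0 : 0 < τ) (hz : 1 ≤ z) : τ * z / 2 ≤ FW τ z := by
  have hz0 : 0 < z := by linarith
  have hc := cosh_pos z
  have hs := self_lt_sinh_iff.2 hz0
  have h2 : cosh z ≤ 2 * sinh z := by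
    refine (sq_le_sq₀ hc.le (by linarith)).1 ?_
    rw [cosh_sq]; nlinarith
  unfold FW
  rw [le_div_iff₀ (by positivity)]
  calc τ * z / 2 * (z * cosh z) ≤ τ * z / 2 * (z * (2 * sinh z)) := by gcongr
    _ = τ * z ^ 2 * sinh z := by ring
    _ ≤ _ := by
      have : 0 < sinh z := by linarith
      gcongr; linarith

lemma mW_eq (g d T z : ℝ) (hz : 0 < z) :
    mW g d T z = √(g * d * FW (T / (g * d ^ 2)) z) := by
  unfold mW FW
  rw [if_neg hz.ne', tanh_eq_sinh_div_cosh]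
  congr 1
  have := (cosh_pos z).ne'
  have := hz.ne'
  generalize T / (g * d ^ 2) = t
  field_simp

lemma mW_iff (g d T z w : ℝ) (hg : 0 < g) (hd : 0 < d) (hτ : 0 < T / (g * d ^ 2))
    (hz : 0 < z) (hw : 0 < w) :
    mW g d T z = mW g d T w ↔ FW (T / (g * d ^ 2)) z = FW (T / (g * d ^ 2)) w := by
  rw [mW_eq _ _ _ _ hz, mW_eq _ _ _ _ hw]
  have hp : ∀ y, 0 < y → 0 < FW (T / (g * d ^ 2)) y := by
    intro y hy
    have := sinh_pos_iff.2 hy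
    have := cosh_pos y
    unfold FW
    positivity
  have h1 := hp z hz
  have h2 := hp w hw
  rw [sqrt_inj (by positivity) (by positivity)]
  exact mul_right_inj' (by positivity)

lemma FW_exists (τ z : ℝ) (hz : 0 < z)
    (ha : StrictAntiOn (FW τ) (Set.Ioc 0 z)) (hm : StrictMonoOn (FW τ) (Set.Ici z))
    (N : ℕ) (hN : 2 ≤ N) : ∃ k, 0 < k ∧ FW τ k = FW τ (N * k) := by
  have hN' : (2 : ℝ) ≤ N := by exact_mod_cast hN
  have hN0 : (0 : ℝ) < N := by linarith
  have hlt : z / N < z := div_lt_self hz (by linarith)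
  have hp : 0 < z / N := by positivity
  have h1 : FW τ z < FW τ (z / N) := ha ⟨hp, hlt.le⟩ ⟨hz, le_rfl⟩ hlt
  have h2 : FW τ z < FW τ (N * z) := by
    have hh : z < N * z := by nlinarith
    exact hm (Set.mem_Ici.2 le_rfl) (Set.mem_Ici.2 hh.le) hh
  have hcont : ContinuousOn (fun k => FW τ (N * k) - FW τ k) (Set.Ioi 0) := by
    apply ContinuousOn.sub _ (FW_cont τ)
    apply (FW_cont τ).comp (by fun_prop)
    intro y hy
    exact mul_pos hN0 hy
  have := isPreconnected_Ioi.intermediate_value (s := Set.Ioi (0 : ℝ)) hp hz hcont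
  obtain ⟨k, hk, hkk⟩ := this (show (0 : ℝ) ∈ _ from ⟨by
    rw [mul_div_cancel₀ _ hN0.ne']; linarith, by linarith⟩)
  exact ⟨k, hk, by linarith⟩

lemma FW_between (τ z : ℝ)
    (ha : StrictAntiOn (FW τ) (Set.Ioc 0 z)) (hm : StrictMonoOn (FW τ) (Set.Ici z))
    (N : ℕ) (hN : 2 ≤ N) (k : ℝ) (hk : 0 < k) (h : FW τ k = FW τ (N * k)) :
    k < z ∧ z < N * k := by
  have hN' : (2 : ℝ) ≤ N := by exact_mod_cast hN
  have hlt : k < N * k := by nlinarith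
  constructor
  · by_contra! hc
    have := hm (Set.mem_Ici.2 hc) (Set.mem_Ici.2 (hc.trans hlt.le)) hlt
    linarith
  · by_contra! hc
    have := ha ⟨hk, hlt.le.trans hc⟩ ⟨hk.trans hlt, hc⟩ hlt
    linarith

lemma FW_compare (τ z : ℝ)
    (ha : StrictAntiOn (FW τ) (Set.Ioc 0 z)) (hm : StrictMonoOn (FW τ) (Set.Ici z))
    (M N : ℕ) (hM : 2 ≤ M) (hMN : M ≤ N) (k l : ℝ) (hk : 0 < k) (hl : 0 < l)
    (h : FW τ k = FW τ (M * k)) (h' : FW τ l = FW τ (N * l)) : l ≤ k ∧ (M < N → l < k) := by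
  obtain ⟨a1, a2⟩ := FW_between τ z ha hm M hM k hk h
  obtain ⟨b1, b2⟩ := FW_between τ z ha hm N (hM.trans hMN) l hl h'
  have hMN' : (M : ℝ) ≤ N := by exact_mod_cast hMN
  have hM0 : (0 : ℝ) < M := by exact_mod_cast (by omega : 0 < M)
  refine ⟨?_, ?_⟩
  · by_contra! hc
    have c1 := ha ⟨hk, a1.le⟩ ⟨hl, b1.le⟩ hc
    have c2 := hm (Set.mem_Ici.2 a2.le) (Set.mem_Ici.2 b2.le)
      (by nlinarith [mul_le_mul_of_nonneg_right hMN' hl.le] : (M : ℝ) * k < N * l)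
    linarith
  · intro hs
    have hs' : (M : ℝ) < N := by exact_mod_cast hs
    by_contra! hc
    have c1 := ha.antitoneOn ⟨hk, a1.le⟩ ⟨hl, b1.le⟩ hc
    have c2 := hm (Set.mem_Ici.2 a2.le) (Set.mem_Ici.2 b2.le)
      (by nlinarith [mul_lt_mul_of_pos_right hs' hl] : (M : ℝ) * k < N * l)
    linarith

/-- if `0 < τ < 1/3`, for each integer `N ≥ 2` there is a unique `k_N > 0`
with `m(k_N) = m(N k_N)`; the sequence `(k_N)` is strictly decreasing and `k_N → 0`. -/
theorem whitham_symbol_resonant_wavenumbers (g d T : ℝ)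
    (hg : 0 < g) (hd : 0 < d)
    (hτ0 : 0 < T / (g * d ^ 2)) (hτ1 : T / (g * d ^ 2) < 1 / 3) :
    ∃ kseq : ℕ → ℝ,
      (∀ N : ℕ, 2 ≤ N →
        0 < kseq N ∧ mW g d T (kseq N) = mW g d T (N * kseq N) ∧
        ∀ k : ℝ, 0 < k → mW g d T k = mW g d T (N * k) → k = kseq N) ∧
      (∀ M N : ℕ, 2 ≤ M → M < N → kseq N < kseq M) ∧
      Tendsto kseq atTop (nhds 0) := by
  obtain ⟨z, hz, ha, hm⟩ := FW_unimodal _ hτ0 hτ1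
  have hex := FW_exists _ z hz ha hm
  choose! K hK0 hK using hex
  have hpos : ∀ N : ℕ, 2 ≤ N → (0 : ℝ) < N := fun N hN => by exact_mod_cast (by omega : 0 < N)
  refine ⟨K, ?_, ?_, ?_⟩
  · intro N hN
    refine ⟨hK0 N hN, ?_, ?_⟩
    · rw [mW_iff g d T _ _ hg hd hτ0 (hK0 N hN) (mul_pos (hpos N hN) (hK0 N hN))]
      exact hK N hN
    · intro k hk h
      rw [mW_iff g d T _ _ hg hd hτ0 hk (mul_pos (hpos N hN) hk)] at h
      exact le_antisymm
        (FW_compare _ z ha hm N N hN le_rfl _ _ (hK0 N hN) hk (hK N hN) h).1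
        (FW_compare _ z ha hm N N hN le_rfl _ _ hk (hK0 N hN) h (hK N hN)).1
  · intro M N hM hMN
    exact (FW_compare _ z ha hm M N hM hMN.le _ _ (hK0 M hM) (hK0 N (by omega)) (hK M hM)
      (hK N (by omega))).2 hMN
  · generalize T / (g * d ^ 2) = τ at *
    have hB : ∀ N : ℕ, 2 ≤ N → K N ≤ max 1 (2 * (1 + τ * z ^ 2) / τ) / N := by
      intro N hN
      have hk := hK0 N hN
      rw [le_div_iff₀ (hpos N hN)]
      by_cases h1 : 1 ≤ N * K N
      · apply le_max_of_le_right
        rw [le_div_iff₀ hτ0]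
        have c1 := FW_low τ _ hτ0 h1
        have c2 := FW_up τ _ hτ0 hk
        have c3 := (FW_between τ z ha hm N hN _ hk (hK N hN)).1
        have c4 : τ * K N ^ 2 ≤ τ * z ^ 2 := by gcongr
        have c5 := hK N hN
        nlinarith
      · apply le_max_of_le_left
        linarith
    refine tendsto_of_tendsto_of_tendsto_of_le_of_le' tendsto_const_nhds
      (tendsto_const_div_atTop_nhds_zero_nat (max 1 (2 * (1 + τ * z ^ 2) / τ))) ?_ ?_
    · filter_upwards [eventually_ge_atTop 2] with N hN using (hK0 N hN).le
    · filter_upwards [eventually_ge_atTop 2] with N hN using hB N hN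
end

section
/- Let T > 0, k > 0, c ∈ ℝ and b ∈ ℝ. Suppose w is a real-valued 2π-periodic function of class H¹ (i.e. ∑_{n∈ℤ}(1 + n²)|ŵ_n|² < ∞) that satisfies the steady Whitham equation M_k w − c·w + w² = b in the Fourier sense: for every n ∈ ℤ, m(kn)·ŵ_n − c·ŵ_n + (w²)^_n equals b if n = 0 and equals 0 otherwise. Then w is smooth: for every s ≥ 0, ∑_{n∈ℤ}(1 + n²)^s |ŵ_n|² < ∞. -/
open Real Filter

noncomputable def sg (n : ℤ) : ℝ := Real.sqrt (1 + |(n : ℝ)|)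

lemma sg_sq (n : ℤ) : sg n ^ 2 = 1 + |(n : ℝ)| := Real.sq_sqrt (by positivity)

lemma sg_pos (n : ℤ) : 0 < sg n := Real.sqrt_pos.2 (by positivity)

lemma sg_one_le (n : ℤ) : 1 ≤ sg n := by
  rw [sg, Real.one_le_sqrt]; linarith [abs_nonneg (n : ℝ)]

lemma sg_mul (n j : ℤ) : sg n ≤ sg j * sg (n - j) := by
  unfold sg
  rw [← Real.sqrt_mul (by positivity)]
  apply Real.sqrt_le_sqrt
  have h : |(n : ℝ)| ≤ |(j : ℝ)| + |((n - j : ℤ) : ℝ)| := by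
    have := abs_add_le (j : ℝ) ((n - j : ℤ) : ℝ)
    push_cast at this ⊢
    simpa using this
  nlinarith [mul_nonneg (abs_nonneg (j : ℝ)) (abs_nonneg ((n - j : ℤ) : ℝ))]

lemma sg_tendsto : Tendsto sg cofinite atTop := by
  unfold sg
  apply Real.tendsto_sqrt_atTop.comp
  apply tendsto_atTop_add_const_left
  have h := Int.tendsto_coe_cofinite
  have h2 := tendsto_norm_cocompact_atTop (E := ℝ)
  exact h2.comp h

def convEquiv : ℤ × ℤ ≃ ℤ × ℤ where
  toFun p := (p.2, p.1 - p.2)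
  invFun q := (q.1 + q.2, q.1)
  left_inv p := by ext <;> simp
  right_inv q := by ext <;> simp

lemma conv_summable (u : ℤ → ℝ) (h0 : ∀ n, 0 ≤ u n) (hu : Summable u) :
    (∀ n, Summable fun j => u j * u (n - j)) ∧ Summable fun n => ∑' j, u j * u (n - j) := by
  have h1 : Summable fun p : ℤ × ℤ => u p.1 * u p.2 := hu.mul_of_nonneg hu h0 h0
  have h2 : Summable fun p : ℤ × ℤ => u p.2 * u (p.1 - p.2) := (convEquiv.summable_iff).2 h1
  exact ⟨fun n => h2.prod_factor n, h2.prod⟩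

lemma my_tanh_mono : StrictMono Real.tanh := by
  intro a b hab
  rw [Real.tanh_eq_sinh_div_cosh, Real.tanh_eq_sinh_div_cosh,
    div_lt_div_iff₀ (Real.cosh_pos _) (Real.cosh_pos _)]
  have h : 0 < Real.sinh (b - a) := Real.sinh_pos_iff.2 (by linarith)
  rw [Real.sinh_sub] at h
  linarith

lemma mW_lower (g d T k : ℝ) (hg : 0 < g) (hd : 0 < d) (hT : 0 < T) (hk : 0 < k) :
    ∃ C : ℝ, 0 < C ∧ ∀ n : ℤ, n ≠ 0 → C * sg n ≤ mW g d T (k * n) := by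
  have htk : 0 < Real.tanh k := by simpa using my_tanh_mono hk
  refine ⟨Real.sqrt (T / d * k * Real.tanh k / 2), by positivity, fun n hn => ?_⟩
  have hnR : (n : ℝ) ≠ 0 := by exact_mod_cast hn
  have hz : k * (n : ℝ) ≠ 0 := mul_ne_zero hk.ne' hnR
  have hn1 : (1 : ℝ) ≤ |(n : ℝ)| := by exact_mod_cast Int.one_le_abs hn
  rw [mW, if_neg hz, sg, ← Real.sqrt_mul (by positivity)]
  apply Real.sqrt_le_sqrt
  have hev : Real.tanh (k * n) / (k * n) = Real.tanh (k * |(n : ℝ)|) / (k * |(n : ℝ)|) := by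
    rcases abs_choice (n : ℝ) with h | h <;> rw [h]
    rw [mul_neg, Real.tanh_neg, neg_div_neg_eq]
  rw [mul_div_assoc (g * d * _), hev]
  have hsq : (k * (n : ℝ)) ^ 2 = (k * |(n : ℝ)|) ^ 2 := by rw [mul_pow, mul_pow, sq_abs]
  rw [hsq]
  set x := |(n : ℝ)|
  have hx : 0 < x := by linarith
  have hmono : Real.tanh k ≤ Real.tanh (k * x) :=
    my_tanh_mono.monotone (by nlinarith)
  set t := Real.tanh (k * x)
  have e : g * d * (1 + T / (g * d ^ 2) * (k * x) ^ 2) * (t / (k * x))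
      = g * d * (t / (k * x)) + T / d * k * t * x := by
    field_simp
  rw [e]
  have ht : 0 < t := by linarith
  have h1 : 0 ≤ g * d * (t / (k * x)) := by positivity
  have hA : 0 < T / d * k := by positivity
  have h2 : T / d * k * Real.tanh k * x ≤ T / d * k * t * x := by gcongr
  have h3 : T / d * k * Real.tanh k / 2 * (1 + x) ≤ T / d * k * Real.tanh k * x := by
    have : 0 < T / d * k * Real.tanh k := by positivity
    nlinarith
  linarith

lemma step (wh : ℤ → ℂ) (μ : ℤ → ℝ) (c C : ℝ) (hC : 0 < C)
    (hμ : ∀ n : ℤ, n ≠ 0 → C * sg n ≤ μ n)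
    (heq : ∀ n : ℤ, n ≠ 0 → (μ n : ℂ) * wh n - (c : ℂ) * wh n +
        (∑' j : ℤ, wh j * wh (n - j)) = 0)
    (h0 : Summable fun n => ‖wh n‖)
    (p : ℕ) (hp : Summable fun n => sg n ^ p * ‖wh n‖) :
    Summable fun n => sg n ^ (p + 1) * ‖wh n‖ := by
  have hc0 := conv_summable _ (fun n => norm_nonneg (wh n)) h0
  have hnn : ∀ n, 0 ≤ sg n ^ p * ‖wh n‖ := fun n => by have := sg_pos n; positivity
  have hcp := conv_summable _ hnn hp
  refine Summable.of_norm_bounded_eventually (hcp.2.mul_left (2 / C)) ?_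
  filter_upwards [sg_tendsto.eventually_ge_atTop (2 * |c| / C),
    (Set.finite_singleton (0 : ℤ)).compl_mem_cofinite] with n hn hn0
  have hn0 : n ≠ 0 := hn0
  have hs := sg_pos n
  rw [Real.norm_of_nonneg (by positivity)]
  have e1 : ((μ n - c : ℝ) : ℂ) * wh n = - ∑' j : ℤ, wh j * wh (n - j) := by
    have := heq n hn0
    push_cast
    linear_combination this
  have e2 : |μ n - c| * ‖wh n‖ = ‖∑' j : ℤ, wh j * wh (n - j)‖ := by
    rw [← norm_neg (∑' j : ℤ, wh j * wh (n - j)), ← e1, norm_mul, Complex.norm_real,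
      Real.norm_eq_abs]
  have e3 : ‖∑' j : ℤ, wh j * wh (n - j)‖ ≤ ∑' j : ℤ, ‖wh j‖ * ‖wh (n - j)‖ := by
    have := norm_tsum_le_tsum_norm (f := fun j => wh j * wh (n - j))
      (by simpa only [norm_mul] using hc0.1 n)
    simpa only [norm_mul] using this
  have e4 : C / 2 * sg n ≤ |μ n - c| := by
    have h1 := hμ n hn0
    have h2 : 2 * |c| ≤ sg n * C := (div_le_iff₀ hC).1 hn
    have h3 := le_abs_self (μ n - c)
    have h4 := le_abs_self c
    nlinarith
  have e5 : sg n ^ p * ∑' j : ℤ, ‖wh j‖ * ‖wh (n - j)‖ ≤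
      ∑' j, (sg j ^ p * ‖wh j‖) * (sg (n - j) ^ p * ‖wh (n - j)‖) := by
    rw [← tsum_mul_left]
    refine Summable.tsum_le_tsum (fun j => ?_) ((hc0.1 n).mul_left _) (hcp.1 n)
    have : sg n ^ p ≤ sg j ^ p * sg (n - j) ^ p := by
      rw [← mul_pow]; exact pow_le_pow_left₀ hs.le (sg_mul n j) p
    calc _ ≤ (sg j ^ p * sg (n - j) ^ p) * (‖wh j‖ * ‖wh (n - j)‖) := by gcongr
      _ = _ := by ring
  have e6 : C / 2 * sg n * ‖wh n‖ ≤ ∑' j : ℤ, ‖wh j‖ * ‖wh (n - j)‖ :=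
    (mul_le_mul_of_nonneg_right e4 (norm_nonneg _)).trans (e2.le.trans e3)
  calc sg n ^ (p + 1) * ‖wh n‖ = 2 / C * (sg n ^ p * (C / 2 * sg n * ‖wh n‖)) := by
        field_simp
        ring
    _ ≤ 2 / C * (sg n ^ p * ∑' j : ℤ, ‖wh j‖ * ‖wh (n - j)‖) := by gcongr
    _ ≤ _ := by gcongr

lemma base (wh : ℤ → ℂ)
    (hH1 : Summable fun n : ℤ => (1 + (n : ℝ) ^ 2) * ‖wh n‖ ^ 2) :
    Summable fun n => ‖wh n‖ := by
  have h1 : Summable fun n : ℤ => 1 / (n : ℝ) ^ 2 :=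
    Real.summable_one_div_int_pow.2 (by norm_num)
  refine Summable.of_norm_bounded_eventually (h1.add hH1) ?_
  filter_upwards [(Set.finite_singleton (0 : ℤ)).compl_mem_cofinite] with n hn0
  have hn0 : (n : ℝ) ≠ 0 := by exact_mod_cast (show n ≠ 0 from hn0)
  rw [norm_norm]
  have hx : 0 < (n : ℝ) ^ 2 := by positivity
  set x := (n : ℝ) ^ 2
  set a := ‖wh n‖
  have ha : 0 ≤ a := norm_nonneg _
  have h2 : 2 * a ≤ 1 / x + x * a ^ 2 := by
    have : 1 / x + x * a ^ 2 - 2 * a = (1 - x * a) ^ 2 / x := by field_simp; ring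
    have : 0 ≤ (1 - x * a) ^ 2 / x := by positivity
    linarith
  nlinarith [sq_nonneg a]

/-- if a real-valued `2π`-periodic `H¹` function `w` (described via its
Fourier coefficients `wh : ℤ → ℂ`, with the reality condition `wh(−n) = conj (wh n)`,
the Fourier coefficients of `w²` being the convolution `∑ⱼ wh j · wh (n−j)`) satisfies
`M_k w − c w + w² = b` in the Fourier sense, then `w` is smooth, i.e. its Fourier
coefficients lie in every Sobolev space `H^s_{2π}`, `s ≥ 0`. -/
theorem whitham_steady_solution_smooth (g d T : ℝ) (hg : 0 < g) (hd : 0 < d) (hT : 0 < T)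
    (k : ℝ) (hk : 0 < k) (c b : ℝ) (wh : ℤ → ℂ)
    (hreal : ∀ n : ℤ, wh (-n) = starRingEnd ℂ (wh n))
    (hH1 : Summable fun n : ℤ => (1 + (n : ℝ) ^ 2) * ‖wh n‖ ^ 2)
    (heq : ∀ n : ℤ,
      (mW g d T (k * (n : ℝ)) : ℂ) * wh n - (c : ℂ) * wh n +
        (∑' j : ℤ, wh j * wh (n - j)) = if n = 0 then (b : ℂ) else 0) :
    ∀ s : ℝ, 0 ≤ s → Summable fun n : ℤ => (1 + (n : ℝ) ^ 2) ^ s * ‖wh n‖ ^ 2 := by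
  obtain ⟨C, hC, hm⟩ := mW_lower g d T k hg hd hT hk
  have h0 := base wh hH1
  have hall : ∀ p : ℕ, Summable fun n => sg n ^ p * ‖wh n‖ := by
    intro p
    induction p with
    | zero => simpa using h0
    | succ p ih =>
      exact step wh (fun n => mW g d T (k * n)) c C hC hm
        (fun n hn => by simpa [hn] using heq n) h0 p ih
  intro s hs
  obtain ⟨N, hN⟩ := exists_nat_ge s
  have hb := hall (2 * N)
  refine Summable.of_norm_bounded_eventually hb ?_
  filter_upwards [hb.tendsto_cofinite_zero.eventually_le_const (zero_lt_one)] with n hn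
  have hsp := sg_pos n
  rw [Real.norm_of_nonneg (by positivity)]
  have h1 : (1 + (n : ℝ) ^ 2) ^ s ≤ (sg n ^ (2 * N)) ^ 2 := by
    calc (1 + (n : ℝ) ^ 2) ^ s ≤ (1 + (n : ℝ) ^ 2) ^ (N : ℝ) :=
          Real.rpow_le_rpow_of_exponent_le (by nlinarith [sq_nonneg (n : ℝ)]) hN
      _ = (1 + (n : ℝ) ^ 2) ^ N := Real.rpow_natCast _ _
      _ ≤ ((sg n ^ 2) ^ 2) ^ N := by
          gcongr
          rw [sg_sq]
          nlinarith [sq_abs (n : ℝ), abs_nonneg (n : ℝ)]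
      _ = _ := by ring
  calc (1 + (n : ℝ) ^ 2) ^ s * ‖wh n‖ ^ 2 ≤ (sg n ^ (2 * N)) ^ 2 * ‖wh n‖ ^ 2 := by gcongr
    _ = (sg n ^ (2 * N) * ‖wh n‖) * (sg n ^ (2 * N) * ‖wh n‖) := by ring
    _ ≤ 1 * (sg n ^ (2 * N) * ‖wh n‖) := by gcongr
    _ = _ := one_mul _
end

section
/- Let g, d, T > 0 and k > 0. The second-harmonic (Wilton ripple) resonance condition m(k) = m(2k) holds if and only if τ·k² = tanh²(k)/(3 − tanh²(k)). -/
open Real Filter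

/-- the second-harmonic (Wilton ripple) resonance `m(k) = m(2k)` holds
if and only if `τ k² = tanh²(k)/(3 − tanh²(k))`. -/
theorem wilton_ripple_resonance_condition (g d T : ℝ) (hg : 0 < g) (hd : 0 < d)
    (hT : 0 < T) (k : ℝ) (hk : 0 < k) :
    mW g d T k = mW g d T (2 * k) ↔
      T / (g * d ^ 2) * k ^ 2 = Real.tanh k ^ 2 / (3 - Real.tanh k ^ 2) := by
  have hc : 0 < Real.cosh k := Real.cosh_pos k
  have hs : 0 < Real.sinh k := Real.sinh_pos_iff.mpr hk
  have hcs : Real.cosh k ^ 2 - Real.sinh k ^ 2 = 1 := Real.cosh_sq_sub_sinh_sq k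
  have ht : 0 < Real.tanh k := by
    rw [Real.tanh_eq_sinh_div_cosh]; positivity
  have ht1 : Real.tanh k ^ 2 < 1 := by
    rw [Real.tanh_eq_sinh_div_cosh, div_pow, div_lt_one (by positivity)]
    linarith
  have h2 : Real.tanh (2 * k) = 2 * Real.tanh k / (1 + Real.tanh k ^ 2) := by
    rw [Real.tanh_eq_sinh_div_cosh, Real.tanh_eq_sinh_div_cosh, Real.sinh_two_mul,
      Real.cosh_two_mul]
    field_simp
  have hτ : 0 < T / (g * d ^ 2) := by positivity
  unfold mW
  rw [if_neg hk.ne', if_neg (by positivity), h2]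
  generalize Real.tanh k = t at *
  generalize T / (g * d ^ 2) = τ at *
  rw [Real.sqrt_inj (by positivity) (by positivity), eq_div_iff (show (3 - t ^ 2) ≠ 0 by linarith)]
  have e : g * d * (1 + τ * k ^ 2) * t / k
      - g * d * (1 + τ * (2 * k) ^ 2) * (2 * t / (1 + t ^ 2)) / (2 * k)
      = g * d * t / (k * (1 + t ^ 2)) * (t ^ 2 - τ * k ^ 2 * (3 - t ^ 2)) := by
    field_simp
    ring
  have hp : g * d * t / (k * (1 + t ^ 2)) ≠ 0 := by positivity
  rw [← sub_eq_zero, e, mul_eq_zero, or_iff_right hp, sub_eq_zero, eq_comm]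
end

section
/- If T = 0 (the gravity Whitham symbol m(z) = √(gd·tanh(z)/z), m(0) = √(gd)), then the group velocity z ↦ (z·m(z))' is strictly decreasing on (0, ∞) and satisfies (z·m(z))' < m(0) = √(gd) for every z > 0; in particular the group velocity has no critical points on (0, ∞) and never coincides with the long-wave phase speed m(0). -/
open Real Filter

lemma wh_sinh_lt {z : ℝ} (hz : 0 < z) : Real.sinh z < z * Real.cosh z := by
  have h : StrictMonoOn (fun x : ℝ => x * Real.cosh x - Real.sinh x) (Set.Ici 0) := by
    apply strictMonoOn_of_deriv_pos (convex_Ici 0)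
    · fun_prop
    · intro x hx
      rw [interior_Ici] at hx
      have hx : 0 < x := hx
      have hd : HasDerivAt (fun x : ℝ => x * Real.cosh x - Real.sinh x)
          (1 * Real.cosh x + x * Real.sinh x - Real.cosh x) x :=
        ((hasDerivAt_id x).mul (Real.hasDerivAt_cosh x)).sub (Real.hasDerivAt_sinh x)
      rw [hd.deriv]
      have := mul_pos hx (Real.sinh_pos_iff.2 hx)
      linarith
  have := h (Set.mem_Ici.2 le_rfl) (Set.mem_Ici.2 hz.le) hz
  simp at this
  exact this

lemma wh_anti1 : StrictAntiOn (fun x : ℝ => Real.sinh x / (x * Real.cosh x)) (Set.Ioi 0) := by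
  have hd : ∀ x : ℝ, 0 < x → HasDerivAt (fun x : ℝ => Real.sinh x / (x * Real.cosh x))
      ((Real.cosh x * (x * Real.cosh x) - Real.sinh x * (1 * Real.cosh x + x * Real.sinh x))
        / (x * Real.cosh x) ^ 2) x := fun x hx =>
    (Real.hasDerivAt_sinh x).div ((hasDerivAt_id x).mul (Real.hasDerivAt_cosh x))
      (mul_pos hx (Real.cosh_pos x)).ne'
  apply strictAntiOn_of_deriv_neg (convex_Ioi 0)
  · intro x hx
    exact (hd x hx).continuousAt.continuousWithinAt
  · intro x hx
    rw [interior_Ioi] at hx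
    have hx : 0 < x := hx
    rw [(hd x hx).deriv]
    have hc := Real.cosh_pos x
    apply div_neg_of_neg_of_pos _ (by positivity)
    have h1 := Real.self_lt_sinh_iff.2 hx
    have h2 := Real.one_lt_cosh.2 hx.ne'
    have h3 := Real.cosh_sq x
    nlinarith

lemma wh_anti2 : StrictAntiOn (fun x : ℝ => x / (Real.sinh x * Real.cosh x ^ 3)) (Set.Ioi 0) := by
  have hd : ∀ x : ℝ, 0 < x → HasDerivAt (fun x : ℝ => x / (Real.sinh x * Real.cosh x ^ 3))
      ((1 * (Real.sinh x * Real.cosh x ^ 3) - x * (Real.cosh x * Real.cosh x ^ 3 +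
        Real.sinh x * (((3 : ℕ) : ℝ) * Real.cosh x ^ (3 - 1) * Real.sinh x)))
        / (Real.sinh x * Real.cosh x ^ 3) ^ 2) x := fun x hx =>
    (hasDerivAt_id x).div ((Real.hasDerivAt_sinh x).mul ((Real.hasDerivAt_cosh x).pow 3))
      (mul_pos (Real.sinh_pos_iff.2 hx) (pow_pos (Real.cosh_pos x) 3)).ne'
  apply strictAntiOn_of_deriv_neg (convex_Ioi 0)
  · intro x hx
    exact (hd x hx).continuousAt.continuousWithinAt
  · intro x hx
    rw [interior_Ioi] at hx
    have hx : 0 < x := hx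
    rw [(hd x hx).deriv]
    have hc := Real.cosh_pos x
    have hs := Real.sinh_pos_iff.2 hx
    apply div_neg_of_neg_of_pos _ (by positivity)
    have h1 := mul_lt_mul_of_pos_right (wh_sinh_lt hx) (pow_pos hc 3)
    have h2 : 0 < x * (Real.sinh x ^ 2 * Real.cosh x ^ 2) := by positivity
    norm_num
    nlinarith

lemma wh_deriv (g d : ℝ) (hg : 0 < g) (hd : 0 < d) {z : ℝ} (hz : 0 < z) :
    deriv (fun z : ℝ => z * mW g d 0 z) z = Real.sqrt (g * d) *
      ((Real.sqrt (Real.sinh z / (z * Real.cosh z)) +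
        Real.sqrt (z / (Real.sinh z * Real.cosh z ^ 3))) / 2) := by
  have hc := Real.cosh_pos z
  have hs := Real.sinh_pos_iff.2 hz
  have he : (fun z : ℝ => z * mW g d 0 z) =ᶠ[nhds z]
      fun z => Real.sqrt (g * d) * Real.sqrt (z * (Real.sinh z / Real.cosh z)) := by
    filter_upwards [lt_mem_nhds hz] with x hx
    have hx' := Real.sinh_pos_iff.2 hx
    have hcx := Real.cosh_pos x
    simp only [mW, if_neg hx.ne']
    rw [← Real.sqrt_mul (by positivity), Real.tanh_eq_sinh_div_cosh]
    nth_rewrite 1 [← Real.sqrt_sq hx.le]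
    rw [← Real.sqrt_mul (by positivity)]
    congr 1
    field_simp
    ring
  rw [he.deriv_eq]
  have h1 : HasDerivAt (fun z => Real.sqrt (g * d) * Real.sqrt (z * (Real.sinh z / Real.cosh z)))
      (Real.sqrt (g * d) * ((1 * (Real.sinh z / Real.cosh z) + z *
        ((Real.cosh z * Real.cosh z - Real.sinh z * Real.sinh z) / Real.cosh z ^ 2)) /
        (2 * Real.sqrt (z * (Real.sinh z / Real.cosh z))))) z :=
    (((hasDerivAt_id z).mul ((Real.hasDerivAt_sinh z).div (Real.hasDerivAt_cosh z) hc.ne')).sqrt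
      (mul_pos hz (div_pos hs hc)).ne').const_mul _
  rw [h1.deriv]
  have h2 : Real.cosh z * Real.cosh z - Real.sinh z * Real.sinh z = 1 := by
    have := Real.cosh_sq z
    linarith
  rw [h2]
  congr 1
  have hq : 0 < Real.sqrt (z * (Real.sinh z / Real.cosh z)) := Real.sqrt_pos.2 (by positivity)
  have e1 : Real.sqrt (Real.sinh z / (z * Real.cosh z)) * Real.sqrt (z * (Real.sinh z / Real.cosh z))
      = Real.sinh z / Real.cosh z := by
    rw [← Real.sqrt_mul (by positivity)]
    refine Eq.trans ?_ (Real.sqrt_sq (div_pos hs hc).le)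
    congr 1
    field_simp
  have e2 : Real.sqrt (z / (Real.sinh z * Real.cosh z ^ 3)) *
      Real.sqrt (z * (Real.sinh z / Real.cosh z)) = z * (1 / Real.cosh z ^ 2) := by
    have h0 : 0 ≤ z * (1 / Real.cosh z ^ 2) := by positivity
    rw [← Real.sqrt_mul (by positivity), ← Real.sqrt_sq h0]
    congr 1
    field_simp
  rw [div_eq_div_iff (by positivity) two_ne_zero]
  linear_combination (-2) * e1 - 2 * e2

/-- for `T = 0`, the group velocity `z ↦ (z m(z))'` is strictly decreasing
on `(0,∞)` and satisfies `(z m(z))' < m(0) = √(gd)` for every `z > 0`; in particular it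
has no critical points on `(0,∞)` and never equals the long-wave phase speed `m(0)`. -/
theorem gravity_whitham_group_velocity (g d : ℝ) (hg : 0 < g) (hd : 0 < d) :
    mW g d 0 0 = Real.sqrt (g * d) ∧
    StrictAntiOn (deriv fun z : ℝ => z * mW g d 0 z) (Set.Ioi 0) ∧
    ∀ z : ℝ, 0 < z → deriv (fun z : ℝ => z * mW g d 0 z) z < Real.sqrt (g * d) := by
  have hgd : 0 < Real.sqrt (g * d) := Real.sqrt_pos.2 (mul_pos hg hd)
  refine ⟨by simp [mW], ?_, ?_⟩
  · intro a ha b hb hab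
    have ha' : 0 < a := ha
    have hb' : 0 < b := hb
    rw [wh_deriv g d hg hd ha', wh_deriv g d hg hd hb']
    apply mul_lt_mul_of_pos_left _ hgd
    have hs := Real.sinh_pos_iff.2 hb'
    have hc := Real.cosh_pos b
    have h1 := Real.sqrt_lt_sqrt (by positivity) (wh_anti1 ha hb hab)
    have h2 := Real.sqrt_lt_sqrt (by positivity) (wh_anti2 ha hb hab)
    simp only at h1 h2
    linarith
  · intro z hz
    rw [wh_deriv g d hg hd hz]
    have hs := Real.sinh_pos_iff.2 hz
    have hc := Real.cosh_pos z
    have h1 : Real.sqrt (Real.sinh z / (z * Real.cosh z)) < 1 := by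
      rw [Real.sqrt_lt' one_pos, one_pow, div_lt_one (by positivity)]
      exact wh_sinh_lt hz
    have h2 : Real.sqrt (z / (Real.sinh z * Real.cosh z ^ 3)) < 1 := by
      rw [Real.sqrt_lt' one_pos, one_pow, div_lt_one (by positivity)]
      have h3 := Real.self_lt_sinh_iff.2 hz
      have h4 : 1 ≤ Real.cosh z ^ 3 := one_le_pow₀ (Real.one_le_cosh z)
      nlinarith
    nlinarith
end

section
/- If τ > 1/3, then the group velocity z ↦ (z·m(z))' is strictly increasing on (0, ∞) and satisfies (z·m(z))' > m(0) = √(gd) for every z > 0; in particular the group velocity has no critical points on (0, ∞) and never coincides with the long-wave phase speed m(0). -/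
open Real Filter

theorem cw_congr {f h : ℕ → ℝ} {X : ℝ} (hf : HasSum f X) (e : ∀ n, h n = f n) : HasSum h X := by
  have : h = f := funext e
  rw [this]; exact hf

theorem cw_shift {w X : ℝ} (p q : ℕ → ℝ) (h : HasSum (fun n => p n * (w ^ (2 * n) / ((2 * n).factorial : ℝ))) X)
    (h0 : q 0 = 0) (hq : ∀ n : ℕ, q (n + 1) = (2 * n + 2) * (2 * n + 1) * p n) :
    HasSum (fun n => q n * (w ^ (2 * n) / ((2 * n).factorial : ℝ))) (w ^ 2 * X) := by
  rw [← hasSum_nat_add_iff' 1]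
  simp only [Finset.sum_range_one, h0, zero_mul, sub_zero]
  have h2 := h.mul_left (w ^ 2)
  refine cw_congr h2 ?_
  intro n
  have : ((2 * n).factorial : ℝ) ≠ 0 := by positivity
  rw [hq, show 2 * (n + 1) = (2 * n + 1) + 1 by ring, Nat.factorial_succ, Nat.factorial_succ]
  push_cast
  have h3 : (2 * (n : ℝ) + 1) ≠ 0 := by positivity
  have h4 : (2 * (n : ℝ) + 1 + 1) ≠ 0 := by positivity
  field_simp
  ring

theorem cw_sinh (w : ℝ) : HasSum (fun n : ℕ => (2 * n : ℝ) * (w ^ (2 * n) / ((2 * n).factorial : ℝ))) (w * Real.sinh w) := by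
  rw [← hasSum_nat_add_iff' 1]
  simp only [Finset.sum_range_one, Nat.cast_zero, mul_zero, zero_mul, sub_zero]
  have h2 := (Real.hasSum_sinh w).mul_left w
  refine cw_congr h2 ?_
  intro n
  have : ((2 * n + 1).factorial : ℝ) ≠ 0 := by positivity
  rw [show 2 * (n + 1) = (2 * n + 1) + 1 by ring, Nat.factorial_succ]
  push_cast
  have h4 : (2 * (n : ℝ) + 1 + 1) ≠ 0 := by positivity
  field_simp
  ring

noncomputable def cwc (n : ℕ) : ℝ :=
  4 ^ n * (-72 + 9 * ((2*n) * (2*n-1)) + 3 / 32 * ((2*n) * (2*n-1) * (2*n-2) * (2*n-3)))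
  + 6 * ((2*n) * (2*n-1) * (2*n-2) * (2*n-3) * (2*n-4)) + 96 * ((2*n) * (2*n-1) * (2*n-2))
  + 288 * (2*n)
  - 2 * ((2*n) * (2*n-1) * (2*n-2) * (2*n-3) * (2*n-4) * (2*n-5)
    + 24 * ((2*n) * (2*n-1) * (2*n-2) * (2*n-3)) + 144 * ((2*n) * (2*n-1)))

theorem cwc_nonneg (n : ℕ) (hn : 4 ≤ n) : 0 ≤ cwc n := by
  rcases Nat.lt_or_ge n 6 with h | h
  · interval_cases n <;> norm_num [cwc]
  obtain ⟨k, rfl⟩ := Nat.exists_eq_add_of_le' h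
  have h4 : 96 * ((k : ℝ) + 6) ^ 2 ≤ 4 ^ (k + 6) := by
    clear hn h
    induction k with
    | zero => norm_num
    | succ k ih =>
      have hk : (0 : ℝ) ≤ k := by positivity
      rw [show k + 1 + 6 = (k + 6) + 1 by ring, pow_succ (4:ℝ)]
      push_cast
      nlinarith
  have hk : (0 : ℝ) ≤ k := by positivity
  have hq : 0 ≤ (-72 + 9 * ((2*((k:ℝ)+6)) * (2*((k:ℝ)+6)-1)) + 3 / 32 * ((2*((k:ℝ)+6)) * (2*((k:ℝ)+6)-1) * (2*((k:ℝ)+6)-2) * (2*((k:ℝ)+6)-3))) := by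
    ring_nf; positivity
  have := mul_le_mul_of_nonneg_right h4 hq
  unfold cwc
  push_cast
  have h5 : 0 ≤ 96 * ((k : ℝ) + 6) ^ 2 * (-72 + 9 * ((2*((k:ℝ)+6)) * (2*((k:ℝ)+6)-1)) + 3 / 32 * ((2*((k:ℝ)+6)) * (2*((k:ℝ)+6)-1) * (2*((k:ℝ)+6)-2) * (2*((k:ℝ)+6)-3)))
   + 6 * ((2*((k:ℝ)+6)) * (2*((k:ℝ)+6)-1) * (2*((k:ℝ)+6)-2) * (2*((k:ℝ)+6)-3) * (2*((k:ℝ)+6)-4)) + 96 * ((2*((k:ℝ)+6)) * (2*((k:ℝ)+6)-1) * (2*((k:ℝ)+6)-2))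
  + 288 * (2*((k:ℝ)+6))
  - 2 * ((2*((k:ℝ)+6)) * (2*((k:ℝ)+6)-1) * (2*((k:ℝ)+6)-2) * (2*((k:ℝ)+6)-3) * (2*((k:ℝ)+6)-4) * (2*((k:ℝ)+6)-5)
    + 24 * ((2*((k:ℝ)+6)) * (2*((k:ℝ)+6)-1) * (2*((k:ℝ)+6)-2) * (2*((k:ℝ)+6)-3)) + 144 * ((2*((k:ℝ)+6)) * (2*((k:ℝ)+6)-1))) := by
    ring_nf; positivity
  linarith

theorem cw_series (w : ℝ) (hw : 0 < w) :
    0 < Real.sinh w ^ 2 * (3*w^4+72*w^2-144) + Real.sinh w * (6*w^5+96*w^3+288*w)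
      - (2 * Real.cosh w - 1) * (w^6+24*w^4+144*w^2) := by
  have c0 : HasSum (fun n : ℕ => (1 : ℝ) * (w ^ (2 * n) / ((2 * n).factorial : ℝ))) (Real.cosh w) := by
    simpa using Real.hasSum_cosh w
  have c2 := cw_shift _ (fun n : ℕ => ((2*n) * (2*n-1) : ℝ)) c0 (by simp) (by intro n; push_cast; ring)
  have c4 := cw_shift _ (fun n : ℕ => ((2*n) * (2*n-1) * (2*n-2) * (2*n-3) : ℝ)) c2 (by simp) (by intro n; push_cast; ring)
  have c6 := cw_shift _ (fun n : ℕ => ((2*n) * (2*n-1) * (2*n-2) * (2*n-3) * (2*n-4) * (2*n-5) : ℝ)) c4 (by simp) (by intro n; push_cast; ring)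
  have s1 := cw_sinh w
  have s3 := cw_shift _ (fun n : ℕ => ((2*n) * (2*n-1) * (2*n-2) : ℝ)) s1 (by simp) (by intro n; push_cast; ring)
  have s5 := cw_shift _ (fun n : ℕ => ((2*n) * (2*n-1) * (2*n-2) * (2*n-3) * (2*n-4) : ℝ)) s3 (by simp) (by intro n; push_cast; ring)
  have d0 : HasSum (fun n : ℕ => (4 ^ n : ℝ) * (w ^ (2 * n) / ((2 * n).factorial : ℝ))) (Real.cosh (2 * w)) := by
    convert Real.hasSum_cosh (2 * w) using 2 with n
    rw [mul_pow, pow_mul 2 2 n]; norm_num; ring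
  have d2 := cw_shift _ (fun n : ℕ => (4 ^ n / 4 * ((2*n) * (2*n-1)) : ℝ)) d0 (by simp) (by intro n; push_cast; ring)
  have d4 := cw_shift _ (fun n : ℕ => (4 ^ n / 16 * ((2*n) * (2*n-1) * (2*n-2) * (2*n-3)) : ℝ)) d2 (by simp) (by intro n; push_cast; ring)
  have tot := (((((((((d0.mul_left (-72)).add (d2.mul_left 36)).add (d4.mul_left (3/2))).add (s5.mul_left 6)).add
    (s3.mul_left 96)).add (s1.mul_left 288)).sub (c6.mul_left 2)).sub (c4.mul_left 48)).sub (c2.mul_left 288))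
  have tot2 : HasSum (fun n : ℕ => cwc n * (w ^ (2 * n) / ((2 * n).factorial : ℝ)))
    (-72 * Real.cosh (2 * w) + 36 * (w ^ 2 * Real.cosh (2 * w)) + 3 / 2 * (w ^ 2 * (w ^ 2 * Real.cosh (2 * w))) + 6 * (w ^ 2 * (w ^ 2 * (w * Real.sinh w))) + 96 * (w ^ 2 * (w * Real.sinh w)) + 288 * (w * Real.sinh w) - 2 * (w ^ 2 * (w ^ 2 * (w ^ 2 * Real.cosh w))) - 48 * (w ^ 2 * (w ^ 2 * Real.cosh w)) - 288 * (w ^ 2 * Real.cosh w)) := by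
    refine cw_congr tot ?_
    intro n; unfold cwc; ring
  have hle := sum_le_hasSum (Finset.range 4) (by
    intro i hi
    have : 4 ≤ i := by simpa using hi
    have := cwc_nonneg i this
    positivity) tot2
  have e : ∑ i ∈ Finset.range 4, cwc i * (w ^ (2 * i) / ((2 * i).factorial : ℝ)) = 7 * w^6 - 45/2*w^4 - 108*w^2-72 := by
    simp [Finset.sum_range_succ, cwc, Nat.factorial]
    norm_num
    ring
  rw [e, Real.cosh_two_mul, Real.cosh_sq] at hle
  have : 0 < w ^ 6 := by positivity
  nlinarith

theorem cw_key (τ z : ℝ) (hτ : 1 / 3 < τ) (hz : 0 < z) :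
    0 < (3*τ^2*z^4+6*τ*z^2-1) * Real.tanh z ^ 2
      + 2 * (z+4*τ*z^3+3*τ^2*z^5) * Real.tanh z * (1 - Real.tanh z ^ 2)
      - (z+τ*z^3)^2 * (1 - Real.tanh z ^ 2) * (1 + 3 * Real.tanh z ^ 2) := by
  have hser := cw_series (2 * z) (by positivity)
  rw [Real.sinh_two_mul, Real.cosh_two_mul] at hser
  rw [Real.tanh_eq_sinh_div_cosh]
  have hS : z ≤ Real.sinh z := Real.self_le_sinh_iff.2 hz.le
  have hCz : 1 + z ^ 2 / 2 ≤ Real.cosh z := by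
    have h1 : z / 2 ≤ Real.sinh (z / 2) := Real.self_le_sinh_iff.2 (by positivity)
    have h2 : Real.cosh z = Real.cosh (2 * (z / 2)) := by congr 1; ring
    rw [h2, Real.cosh_two_mul, Real.cosh_sq]
    nlinarith
  have hCS := Real.cosh_sq z
  set S := Real.sinh z
  set C := Real.cosh z
  have hC : 0 < C := by nlinarith
  have hSp : 0 < S := by linarith
  have hC2 : 2 * z ^ 2 ≤ C ^ 2 := by nlinarith [sq_nonneg (1 - z^2/2)]
  have h1 : z ^ 2 * S ^ 2 * 2 ≤ S ^ 2 * C ^ 2 := by nlinarith [sq_nonneg S]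
  have hC1 : 1 ≤ C := by nlinarith
  have h2 : z ^ 2 ≤ z * S * C := by
    have : z ≤ S * C := by nlinarith
    nlinarith
  have hp : 0 < z ^ 2 * S ^ 2 := by positivity
  have hp2 : 0 < z * S * C := by positivity
  have hA : 0 < 3*S^2*C^2 + 6*z*S*C - z^2*(C^2+3*S^2) := by
    rw [show z^2*(C^2+3*S^2) = z^2 + 4*(z^2*S^2) by rw [hCS]; ring]
    nlinarith
  have hB : 0 < 6*S^2*C^2 + 8*z*S*C - 2*z^2*(C^2+3*S^2) := by
    rw [show 2*z^2*(C^2+3*S^2) = 2*z^2 + 8*(z^2*S^2) by rw [hCS]; ring]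
    nlinarith
  have hD : 0 < z^4*(1/9)*(3*S^2*C^2 + 6*z*S*C - z^2*(C^2+3*S^2))
      + z^2*(1/3)*(6*S^2*C^2 + 8*z*S*C - 2*z^2*(C^2+3*S^2))
      + (-(S^2*C^2) + 2*z*S*C - z^2*(C^2+3*S^2)) := by
    have : 2 * (C^2+S^2) - 1 = C^2+3*S^2 := by rw [hCS]; ring
    rw [this] at hser
    nlinarith [hser]
  have hτ2 : 1/9 < τ^2 := by nlinarith
  have hE : 0 < z^4*τ^2*(3*S^2*C^2 + 6*z*S*C - z^2*(C^2+3*S^2))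
      + z^2*τ*(6*S^2*C^2 + 8*z*S*C - 2*z^2*(C^2+3*S^2))
      + (-(S^2*C^2) + 2*z*S*C - z^2*(C^2+3*S^2)) := by
    have i1 : z^4*(1/9)*(3*S^2*C^2 + 6*z*S*C - z^2*(C^2+3*S^2)) ≤ z^4*τ^2*(3*S^2*C^2 + 6*z*S*C - z^2*(C^2+3*S^2)) := by
      gcongr
    have i2 : z^2*(1/3)*(6*S^2*C^2 + 8*z*S*C - 2*z^2*(C^2+3*S^2)) ≤ z^2*τ*(6*S^2*C^2 + 8*z*S*C - 2*z^2*(C^2+3*S^2)) := by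
      gcongr
    linarith
  have hs : 1 - (S / C) ^ 2 = 1 / C ^ 2 := by
    field_simp
    linarith
  rw [hs]
  have : (3*τ^2*z^4+6*τ*z^2-1) * (S/C) ^ 2
      + 2 * (z+4*τ*z^3+3*τ^2*z^5) * (S/C) * (1 / C^2)
      - (z+τ*z^3)^2 * (1 / C^2) * (1 + 3 * (S/C) ^ 2) = (z^4*τ^2*(3*S^2*C^2 + 6*z*S*C - z^2*(C^2+3*S^2))
      + z^2*τ*(6*S^2*C^2 + 8*z*S*C - 2*z^2*(C^2+3*S^2))
      + (-(S^2*C^2) + 2*z*S*C - z^2*(C^2+3*S^2))) / C ^ 4 := by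
    field_simp
    ring
  rw [this]
  positivity

theorem cw_tanh (z : ℝ) : HasDerivAt Real.tanh (1 - Real.tanh z ^ 2) z := by
  have h := (Real.hasDerivAt_sinh z).div (Real.hasDerivAt_cosh z) (Real.cosh_pos z).ne'
  have e : Real.tanh = fun y => Real.sinh y / Real.cosh y := by
    funext y; exact Real.tanh_eq_sinh_div_cosh y
  rw [e]
  refine h.congr_deriv ?_
  have := (Real.cosh_pos z).ne'
  field_simp

noncomputable def cwF (τ z : ℝ) : ℝ := (z + τ * z ^ 3) * Real.tanh z
noncomputable def cwF1 (τ z : ℝ) : ℝ :=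
  (1 + 3 * τ * z ^ 2) * Real.tanh z + (z + τ * z ^ 3) * (1 - Real.tanh z ^ 2)
noncomputable def cwF2 (τ z : ℝ) : ℝ :=
  6 * τ * z * Real.tanh z + 2 * (1 + 3 * τ * z ^ 2) * (1 - Real.tanh z ^ 2)
  - 2 * (z + τ * z ^ 3) * Real.tanh z * (1 - Real.tanh z ^ 2)

theorem cwF_deriv (τ z : ℝ) : HasDerivAt (cwF τ) (cwF1 τ z) z := by
  have h1 : HasDerivAt (fun z : ℝ => z + τ * z ^ 3) (1 + 3 * τ * z ^ 2) z := by
    refine HasDerivAt.congr_deriv ((hasDerivAt_id z).add ((hasDerivAt_pow 3 z).const_mul τ)) ?_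
    push_cast; ring
  exact h1.mul (cw_tanh z)

theorem cwF1_deriv (τ z : ℝ) : HasDerivAt (cwF1 τ) (cwF2 τ z) z := by
  have h1 : HasDerivAt (fun z : ℝ => z + τ * z ^ 3) (1 + 3 * τ * z ^ 2) z := by
    refine HasDerivAt.congr_deriv ((hasDerivAt_id z).add ((hasDerivAt_pow 3 z).const_mul τ)) ?_
    push_cast; ring
  have h2 : HasDerivAt (fun z : ℝ => 1 + 3 * τ * z ^ 2) (6 * τ * z) z := by
    refine HasDerivAt.congr_deriv (((hasDerivAt_pow 2 z).const_mul (3 * τ)).const_add 1) ?_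
    push_cast; ring
  have h3 := (h2.mul (cw_tanh z)).add (h1.mul (((cw_tanh z).pow 2).const_sub 1))
  refine h3.congr_deriv ?_
  unfold cwF2; simp only [Pi.pow_apply]; push_cast; ring

theorem cw_tanh_pos {z : ℝ} (hz : 0 < z) : 0 < Real.tanh z := by
  rw [Real.tanh_eq_sinh_div_cosh]
  exact div_pos (Real.sinh_pos_iff.2 hz) (Real.cosh_pos z)

theorem cwF_pos {τ z : ℝ} (hτ : 1/3 < τ) (hz : 0 < z) : 0 < cwF τ z := by
  have := cw_tanh_pos hz
  have : 0 < τ := by linarith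
  unfold cwF; positivity

noncomputable def cwV (τ z : ℝ) : ℝ := cwF1 τ z / (2 * Real.sqrt (cwF τ z))

theorem cwV_deriv {τ z : ℝ} (hτ : 1/3 < τ) (hz : 0 < z) :
    ∃ v, 0 < v ∧ HasDerivAt (cwV τ) v z := by
  have hF := cwF_pos hτ hz
  have hr : 0 < Real.sqrt (cwF τ z) := Real.sqrt_pos.2 hF
  have hsq := Real.sq_sqrt hF.le
  have h := (cwF1_deriv τ z).div (((cwF_deriv τ z).sqrt hF.ne').const_mul 2) (by positivity)
  refine ⟨_, ?_, h⟩
  apply div_pos _ (by positivity)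
  have hk := cw_key τ z hτ hz
  have hk2 : 0 < 2 * cwF τ z * cwF2 τ z - cwF1 τ z ^ 2 := by
    refine lt_of_lt_of_eq hk ?_
    unfold cwF cwF1 cwF2; ring
  have e : cwF2 τ z * (2 * √(cwF τ z)) - cwF1 τ z * (2 * (cwF1 τ z / (2 * √(cwF τ z))))
      = (2 * cwF τ z * cwF2 τ z - cwF1 τ z ^ 2) / √(cwF τ z) := by
    field_simp
    rw [hsq]
  rw [e]
  positivity

theorem cwV_mono {τ : ℝ} (hτ : 1/3 < τ) : StrictMonoOn (cwV τ) (Set.Ioi 0) := by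
  apply strictMonoOn_of_deriv_pos (convex_Ioi 0)
  · intro z hz
    obtain ⟨v, _, h⟩ := cwV_deriv hτ hz
    exact h.continuousAt.continuousWithinAt
  · intro z hz
    rw [interior_Ioi] at hz
    obtain ⟨v, hv, h⟩ := cwV_deriv hτ hz
    rwa [h.deriv]

theorem cwV_lim (τ : ℝ) : Tendsto (cwV τ) (nhdsWithin 0 (Set.Ioi 0)) (nhds 1) := by
  have ht : Tendsto (fun z : ℝ => Real.tanh z / z) (nhdsWithin 0 (Set.Ioi 0)) (nhds 1) := by
    have h := hasDerivAt_iff_tendsto_slope.1 (cw_tanh 0)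
    have h' := h.mono_left (nhdsWithin_mono (0:ℝ) (fun x (hx : x ∈ Set.Ioi (0:ℝ)) => (ne_of_gt hx : x ≠ 0)))
    simp only [Real.tanh_zero] at h'
    convert h' using 2 with z
    · simp [slope_def_field]
    · norm_num
  have hz : Tendsto (fun z : ℝ => z) (nhdsWithin 0 (Set.Ioi 0)) (nhds 0) :=
    tendsto_id.mono_left nhdsWithin_le_nhds
  have htt : Tendsto (fun z : ℝ => Real.tanh z) (nhdsWithin 0 (Set.Ioi 0)) (nhds 0) := by
    have := (cw_tanh 0).continuousAt.tendsto.mono_left (nhdsWithin_le_nhds (s := Set.Ioi 0))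
    simpa using this
  have hP : Tendsto (fun z : ℝ => 1 + τ * z ^ 2) (nhdsWithin 0 (Set.Ioi 0)) (nhds (1 + τ * 0 ^ 2)) :=
    ((hz.pow 2).const_mul τ).const_add 1
  have hP3 : Tendsto (fun z : ℝ => 1 + 3 * τ * z ^ 2) (nhdsWithin 0 (Set.Ioi 0)) (nhds (1 + 3 * τ * 0 ^ 2)) :=
    ((hz.pow 2).const_mul (3 * τ)).const_add 1
  have hs : Tendsto (fun z : ℝ => 1 - Real.tanh z ^ 2) (nhdsWithin 0 (Set.Ioi 0)) (nhds (1 - 0 ^ 2)) :=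
    (htt.pow 2).const_sub 1
  have hl := ((hP3.mul ht).add (hP.mul hs)).div ((Real.continuous_sqrt.continuousAt.tendsto.comp (hP.mul ht)).const_mul 2) (by simp)
  have e : ((1 + 3 * τ * 0 ^ 2) * 1 + (1 + τ * 0 ^ 2) * (1 - 0 ^ 2)) / (2 * √((1 + τ * 0 ^ 2) * 1)) = 1 := by
    norm_num
  rw [e] at hl
  refine hl.congr' ?_
  filter_upwards [self_mem_nhdsWithin] with z hz
  have hz : 0 < z := hz
  have e2 : cwF τ z = z ^ 2 * ((1 + τ * z ^ 2) * (Real.tanh z / z)) := by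
    unfold cwF; field_simp
  simp only [Function.comp, Pi.div_apply, cwV]
  rw [e2, Real.sqrt_mul (sq_nonneg z), Real.sqrt_sq hz.le]
  have e3 : cwF1 τ z = z * ((1 + 3 * τ * z ^ 2) * (Real.tanh z / z) + (1 + τ * z ^ 2) * (1 - Real.tanh z ^ 2)) := by
    unfold cwF1; field_simp
  rw [e3, show 2 * (z * √((1 + τ * z ^ 2) * (Real.tanh z / z))) = z * (2 * √((1 + τ * z ^ 2) * (Real.tanh z / z))) by ring,
    mul_div_mul_left _ _ hz.ne']

theorem cwV_gt {τ z : ℝ} (hτ : 1/3 < τ) (hz : 0 < z) : 1 < cwV τ z := by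
  have h2 : cwV τ (z / 2) < cwV τ z :=
    cwV_mono hτ (Set.mem_Ioi.2 (by positivity)) (Set.mem_Ioi.2 hz) (by linarith)
  refine lt_of_le_of_lt ?_ h2
  refine le_of_tendsto (cwV_lim τ) ?_
  filter_upwards [Ioo_mem_nhdsGT (show (0:ℝ) < z / 2 by positivity)] with y hy
  exact (cwV_mono hτ hy.1 (Set.mem_Ioi.2 (by positivity)) hy.2).le

theorem cw_deriv {g d T z : ℝ} (hg : 0 < g) (hd : 0 < d) (hτ : 1 / 3 < T / (g * d ^ 2)) (hz : 0 < z) :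
    deriv (fun z : ℝ => z * mW g d T z) z = Real.sqrt (g * d) * cwV (T / (g * d ^ 2)) z := by
  have h := ((cwF_deriv (T / (g * d ^ 2)) z).sqrt (cwF_pos hτ hz).ne').const_mul (Real.sqrt (g * d))
  refine (h.congr_of_eventuallyEq ?_).deriv
  filter_upwards [Ioi_mem_nhds hz] with y hy
  have hy : 0 < y := hy
  unfold mW cwF
  rw [if_neg hy.ne', ← Real.sqrt_mul (by positivity)]
  nth_rewrite 1 [← Real.sqrt_sq hy.le]
  rw [← Real.sqrt_mul (by positivity)]
  congr 1
  field_simp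

/-- if `τ > 1/3`, the group velocity `z ↦ (z m(z))'` is strictly increasing
on `(0,∞)` and satisfies `(z m(z))' > m(0) = √(gd)` for every `z > 0`; in particular it
has no critical points on `(0,∞)` and never equals the long-wave phase speed `m(0)`. -/
theorem capillary_whitham_group_velocity_large_tension (g d T : ℝ)
    (hg : 0 < g) (hd : 0 < d) (hT : 0 ≤ T) (hτ : 1 / 3 < T / (g * d ^ 2)) :
    mW g d T 0 = Real.sqrt (g * d) ∧
    StrictMonoOn (deriv fun z : ℝ => z * mW g d T z) (Set.Ioi 0) ∧
    ∀ z : ℝ, 0 < z → Real.sqrt (g * d) < deriv (fun z : ℝ => z * mW g d T z) z := by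
  have hc : 0 < Real.sqrt (g * d) := Real.sqrt_pos.2 (by positivity)
  refine ⟨by simp [mW], ?_, ?_⟩
  · intro x hx y hy hxy
    rw [cw_deriv hg hd hτ hx, cw_deriv hg hd hτ hy]
    exact mul_lt_mul_of_pos_left (cwV_mono hτ hx hy hxy) hc
  · intro z hz
    rw [cw_deriv hg hd hτ hz]
    have := cwV_gt hτ hz
    nlinarith
end
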